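/- arXiv:1112.4780 — 2 statements merged into one kernel-verified Lean document; each statement's English description precedes it below -/
import Mathlib

section
/- A compact connected set K ⊆ S² is locally connected if and only if both of the following hold: (i) for every ε > 0 there are only finitely many connected components of S² ∖ K with diameter at least ε; and (ii) the frontier of every connected component of S² ∖ K is locally connected. -/
/-!
The argument rests on two facts about the plane, both proved with continuous logarithms.

* Unicoherence (`unicoherent_plane`): if two closed connected sets cover the plane, their
  intersection is connected. Hence, for a plane domain `W`, the frontier of each component `B` of
  the complement of `W` is connected (`isPreconnected_frontier_component`), and it lies in the
  frontier of `W`.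
* Local finiteness (`finite_components_annulus`): if `G` is closed and locally connected along a
  circle, only finitely many components of the complement of `G` cross an annulus around that
  circle. The functions `z - w`, with `w` in different bounded components, are multiplicatively
  independent modulo functions with a logarithm on `G` (`log_independence`). Local connectedness
  makes the obstruction to a logarithm of a product of their powers a finite list of integers, and
  with too many components some nontrivial product would have one.

Let `K` be locally connected. Around each point of the sphere take a chart `e` of small range. A
component of `S² ∖ K` not contained in that range gives unbounded components of the complement of
`e ⁻¹' K`, of which only finitely many meet the unit disc (`finite_unbounded_components`).
Compactness of the sphere gives (i), see `finite_large_components`. For (ii), let `x` be on the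
frontier of `U`. Near `x`, the set `U` is a union of finitely many chart components `W`. A connected
neighbourhood of `x` in `K` lies in one component `B` of the complement of each such `W`, so near
`x` the frontier of `U` is the union of the sets `frontier B`, connected and all containing `x`
(`locConn_frontier_component`).

Conversely, assume (i) and (ii) and let `C` be a small connected neighbourhood of `x ∈ K` in the
sphere. Replace the part of `C` in each component `U` by a connected subset `L U` of `frontier U`
that contains `C ∩ frontier U`: for the finitely many large `U` it comes from (ii), and for small
`U` it is all of `frontier U`, connected because `U` is not the only component
(`isPreconnected_frontier_of_ne`). The resulting subset of `K` is a small neighbourhood of `x`,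
and it is connected because `C` is (`isPreconnected_patch`): a separation of it would induce one of
`C`, where (i) guarantees that the two parts of `C` are relatively closed.
-/

/-- The 2-sphere, realized as the unit sphere in `ℝ³`. -/
abbrev S2 : Set (EuclideanSpace ℝ (Fin 3)) := Metric.sphere 0 1

open Set Filter Topology Metric

/-! ### Continuous logarithms and unicoherence of the plane -/

/-- `f` has a continuous logarithm on `S`. -/
def HasLog (f : ℂ → ℂ) (S : Set ℂ) : Prop :=
  ∃ h : ℂ → ℂ, ContinuousOn h S ∧ ∀ z ∈ S, Complex.exp (h z) = f z

theorem HasLog.of_continuous {g : ℂ → ℂ} (hg : Continuous g) (h0 : ∀ z, g z ≠ 0) :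
    HasLog g univ := by
  obtain ⟨F, ⟨-, hF⟩, -⟩ := Complex.isCoveringMapOn_exp.existsUnique_continuousMap_lifts
    (⟨g, hg⟩ : C(ℂ, ℂ)) (a₀ := 0) (e₀ := Complex.log (g 0)) (Complex.exp_log (h0 0)) h0
  exact ⟨F, F.continuous.continuousOn, fun z _ => congrFun hF z⟩

theorem HasLog.mul {f g : ℂ → ℂ} {S : Set ℂ} (hf : HasLog f S) (hg : HasLog g S) :
    HasLog (fun z => f z * g z) S := by
  obtain ⟨u, hu, hu'⟩ := hf
  obtain ⟨v, hv, hv'⟩ := hg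
  exact ⟨fun z => u z + v z, hu.add hv, fun z hz => by rw [Complex.exp_add, hu' z hz, hv' z hz]⟩

theorem HasLog.inv {f : ℂ → ℂ} {S : Set ℂ} (hf : HasLog f S) :
    HasLog (fun z => (f z)⁻¹) S := by
  obtain ⟨u, hu, hu'⟩ := hf
  exact ⟨fun z => -u z, hu.neg, fun z hz => by rw [Complex.exp_neg, hu' z hz]⟩

theorem HasLog.congr {f g : ℂ → ℂ} {S : Set ℂ} (hf : HasLog f S) (h : ∀ z ∈ S, f z = g z) :
    HasLog g S := by
  obtain ⟨u, hu, hu'⟩ := hf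
  exact ⟨u, hu, fun z hz => by rw [hu' z hz, h z hz]⟩

/-- The principal branch of the logarithm of `1 + w` for `‖w‖ < 1`. -/
theorem HasLog.one_add {w : ℂ → ℂ} {S : Set ℂ} (hw : ContinuousOn w S) (h1 : ∀ z ∈ S, ‖w z‖ < 1) :
    HasLog (fun z => 1 + w z) S := by
  have hs : ∀ z ∈ S, 1 + w z ∈ Complex.slitPlane := fun z hz =>
    Complex.mem_slitPlane_of_norm_lt_one (h1 z hz)
  exact ⟨fun z => Complex.log (1 + w z), (continuousOn_const.add hw).clog hs,
    fun z hz => Complex.exp_log (Complex.slitPlane_ne_zero (hs z hz))⟩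

/-- A continuous logarithm of `1` on a preconnected set is a constant multiple of `2πi`. -/
theorem exists_int_of_exp_eq_one {X : Type*} [TopologicalSpace X] {S : Set X}
    (hS : IsPreconnected S) {u : X → ℂ}
    (hu : ContinuousOn u S) (h : ∀ z ∈ S, Complex.exp (u z) = 1) :
    ∃ n : ℤ, ∀ z ∈ S, u z = n * (2 * Real.pi * Complex.I) := by
  have hT : IsDiscrete ((AddSubgroup.zmultiples (2 * Real.pi * Complex.I) : AddSubgroup ℂ) : Set ℂ) :=
    ⟨NormedSpace.discreteTopology_zmultiples _⟩
  have hm : MapsTo u S (AddSubgroup.zmultiples (2 * Real.pi * Complex.I) : AddSubgroup ℂ) := by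
    intro z hz
    obtain ⟨n, hn⟩ := Complex.exp_eq_one_iff.1 (h z hz)
    exact AddSubgroup.mem_zmultiples_iff.2 ⟨n, by rw [hn, zsmul_eq_mul]⟩
  obtain ⟨y, hy, hyS⟩ := hS.eqOn_const_of_mapsTo hT hu hm ⟨0, zero_mem _⟩
  obtain ⟨n, hn⟩ := AddSubgroup.mem_zmultiples_iff.1 hy
  exact ⟨n, fun z hz => by rw [hyS hz, ← zsmul_eq_mul, hn]; rfl⟩

/-- The plane is unicoherent. If `A ∩ B` split into closed pieces `C` and `D`, take a Urysohn
function `f`, equal to `0` on `C` and to `1` on `D`. The functions `exp (πi f)` on `A` and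
`exp (-πi f)` on `B` agree on `A ∩ B`; comparing a logarithm of the glued function with `±πi f` at
one point of `C` and one point of `D` gives `2πi = 0`. -/
theorem unicoherent_plane {A B : Set ℂ} (hA : IsClosed A) (hB : IsClosed B)
    (hA' : IsPreconnected A) (hB' : IsPreconnected B) (hAB : A ∪ B = univ) :
    IsPreconnected (A ∩ B) := by
  rw [isPreconnected_iff_subset_of_fully_disjoint_closed (hA.inter hB)]
  intro C D hC hD hCD hdisj
  by_contra! hcon
  obtain ⟨⟨d, hd, hdC⟩, ⟨c, hc, hcD⟩⟩ := And.imp not_subset.1 not_subset.1 hcon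
  have hdD : d ∈ D := (hCD hd).resolve_left hdC
  have hcC : c ∈ C := (hCD hc).resolve_right hcD
  obtain ⟨f, hfC, hfD, -⟩ := exists_continuous_zero_one_of_isClosed hC hD hdisj
  set s : ℂ := Real.pi * Complex.I with hs
  classical
  let g : ℂ → ℂ := fun z => if z ∈ A then Complex.exp (s * f z) else Complex.exp (-(s * f z))
  have hfin : ∀ z ∈ A ∩ B, Complex.exp (s * f z) = Complex.exp (-(s * f z)) := by
    intro z hz
    rcases hCD hz with h | h
    · simp [hfC h]
    · simp [hfD h, hs, Complex.exp_neg]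
  have hgA : ∀ z ∈ A, g z = Complex.exp (s * f z) := fun z hz => if_pos hz
  have hgB : ∀ z ∈ B, g z = Complex.exp (-(s * f z)) := by
    intro z hz
    by_cases h : z ∈ A
    · rw [hgA z h, hfin z ⟨h, hz⟩]
    · exact if_neg h
  have hgc : Continuous g := by
    rw [← continuousOn_univ, ← hAB]
    refine ContinuousOn.union_of_isClosed ?_ ?_ hA hB
    · exact ContinuousOn.congr (Continuous.continuousOn (by fun_prop)) hgA
    · exact ContinuousOn.congr (Continuous.continuousOn (by fun_prop)) hgB
  obtain ⟨h, hh, hhe⟩ := HasLog.of_continuous hgc (fun z => by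
    simp only [g]; split_ifs <;> exact Complex.exp_ne_zero _)
  have hh : Continuous h := continuousOn_univ.1 hh
  obtain ⟨m, hm⟩ := exists_int_of_exp_eq_one hA' (u := fun z => h z - s * f z)
    (Continuous.continuousOn (by fun_prop)) (fun z hz => by
      rw [Complex.exp_sub, hhe z trivial, hgA z hz, div_self (Complex.exp_ne_zero _)])
  obtain ⟨n, hn⟩ := exists_int_of_exp_eq_one hB' (u := fun z => h z + s * f z)
    (Continuous.continuousOn (by fun_prop)) (fun z hz => by
      rw [Complex.exp_add, hhe z trivial, hgB z hz, ← Complex.exp_add, neg_add_cancel,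
        Complex.exp_zero])
  have e1 := hm c hc.1
  have e2 := hn c hc.2
  have e3 := hm d hd.1
  have e4 := hn d hd.2
  simp only [hfC hcC, hfD hdD, Pi.zero_apply, Pi.one_apply, Complex.ofReal_zero,
    Complex.ofReal_one, mul_zero, mul_one, sub_zero, add_zero] at e1 e2 e3 e4
  have h2 : (2 : ℂ) * s = 0 := by linear_combination e4 - e3 + e1 - e2
  simp [hs, Real.pi_ne_zero] at h2

/-! ### Local finiteness of complementary components -/

/-- A nonzero power of `z - c` has no continuous logarithm on a circle about `c`. -/
theorem not_hasLog_zpow {c : ℂ} {R : ℝ} (hR : 0 < R) {a : ℤ} (ha : a ≠ 0) {S : Set ℂ}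
    (hS : sphere c R ⊆ S) : ¬ HasLog (fun z => (z - c) ^ a) S := by
  rintro ⟨h, hh, hhe⟩
  let γ : ℝ → ℂ := fun t => c + R * Complex.exp (t * Complex.I)
  have hγ : ∀ t, γ t ∈ S := fun t => hS (by
    simp [γ, Complex.norm_exp_ofReal_mul_I, abs_of_pos hR])
  have hγc : Continuous γ := by fun_prop
  obtain ⟨n, hn⟩ := exists_int_of_exp_eq_one (X := ℝ) isPreconnected_univ
    (u := fun t => h (γ t) - a * (t * Complex.I + Real.log R))
    (by
      rw [continuousOn_univ]
      exact (hh.comp_continuous hγc hγ).sub (by fun_prop))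
    (fun t _ => by
      rw [Complex.exp_sub, hhe _ (hγ t), Complex.exp_int_mul, Complex.exp_add,
        ← Complex.ofReal_exp, Real.exp_log hR]
      simp only [γ, add_sub_cancel_left]
      rw [mul_comm, div_self]
      exact zpow_ne_zero _ (mul_ne_zero (Complex.exp_ne_zero _) (by exact_mod_cast hR.ne')))
  have h0 := hn 0 trivial
  have h1 := hn (2 * Real.pi) trivial
  have : γ (2 * Real.pi) = γ 0 := by simp [γ]
  simp only [this] at h1
  have h2 : (a : ℂ) * (2 * Real.pi * Complex.I) = 0 := by
    push_cast at h0 h1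
    linear_combination h0 - h1
  simp [ha, Real.pi_ne_zero] at h2

/-- The point `p` may be moved to any `q` of its complementary component without changing `z - p`
modulo functions with a logarithm on `G`: the quotient is close to `1` when `q` is close to `p`, and
the property is transitive. -/
theorem hasLog_div_of_mem_component {G : Set ℂ} (hG : IsClosed G) {p q : ℂ}
    (hq : q ∈ connectedComponentIn Gᶜ p) : HasLog (fun z => (z - p) / (z - q)) G := by
  have hne : ∀ {x z : ℂ}, x ∉ G → z ∈ G → z - x ≠ 0 := fun hx hz h =>
    hx ((sub_eq_zero.1 h) ▸ hz)
  have hsub := connectedComponentIn_subset Gᶜ p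
  have hp : p ∈ Gᶜ := connectedComponentIn_nonempty_iff.1 ⟨q, hq⟩
  have hpc := mem_connectedComponentIn hp
  refine isPreconnected_connectedComponentIn.induction₂'
    (fun p q => HasLog (fun z => (z - p) / (z - q)) G) ?_ ?_ hpc hq
  · intro x hx
    have hxG : x ∉ G := hsub hx
    obtain ⟨r, hr, hball⟩ := Metric.isOpen_iff.1 hG.isOpen_compl x hxG
    filter_upwards [mem_nhdsWithin_of_mem_nhds (ball_mem_nhds x hr)] with y hy
    have hyG : y ∉ G := hball hy
    have key : HasLog (fun z => (z - y) / (z - x)) G := by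
      refine HasLog.congr (f := fun z => 1 + (x - y) / (z - x)) (HasLog.one_add ?_ ?_) ?_
      · exact continuousOn_const.div (by fun_prop) fun z hz => hne hxG hz
      · intro z hz
        have : r ≤ ‖z - x‖ := by
          by_contra! hlt
          exact hball (by simpa [dist_eq_norm] using hlt) hz
        rw [norm_div, div_lt_one (lt_of_lt_of_le hr this)]
        refine lt_of_lt_of_le ?_ this
        rw [norm_sub_rev]; simpa [dist_eq_norm] using hy
      · intro z hz
        have := hne hxG hz
        field_simp
        ring
    exact ⟨key.inv.congr fun z hz => by rw [inv_div], key⟩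
  · intro x y w hx hy hw h1 h2
    refine (h1.mul h2).congr fun z hz => ?_
    have := hne (hsub hy) hz
    have := hne (hsub hw) hz
    field_simp

/-- The frontier of a component of the complement of the closed set `G` lies in `G`. -/
theorem frontier_component_subset {X : Type*} [TopologicalSpace X] [LocallyConnectedSpace X]
    {G : Set X} (hG : IsClosed G) (w : X) : frontier (connectedComponentIn Gᶜ w) ⊆ G := by
  intro z hz
  by_contra hzG
  have hopen : ∀ x, IsOpen (connectedComponentIn Gᶜ x) := fun x =>
    hG.isOpen_compl.connectedComponentIn
  obtain ⟨y, hy1, hy2⟩ := mem_closure_iff.1 hz.1 _ (hopen z) (mem_connectedComponentIn hzG)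
  rw [(hopen w).frontier_eq] at hz
  exact hz.2 (by
    rw [connectedComponentIn_eq hy2, ← connectedComponentIn_eq hy1]
    exact mem_connectedComponentIn hzG)

/-- The classes of `z - pᵢ`, for `pᵢ` in distinct bounded complementary components of `G`, are
independent modulo functions with a logarithm on `G`. A logarithm of the product extends from `G`
over the component `V` of `p k` by Tietze; dividing by the other factors gives a nonvanishing
function on the plane equal to `(z - p k) ^ a k` off `V`. -/
theorem log_independence {G : Set ℂ} (hG : IsClosed G) (hb : Bornology.IsBounded Gᶜ)
    {ι : Type*} [Fintype ι] [DecidableEq ι] {p : ι → ℂ} (hp : ∀ i, p i ∉ G)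
    (hinj : ∀ i j, i ≠ j → p j ∉ connectedComponentIn Gᶜ (p i)) {a : ι → ℤ}
    (hlog : HasLog (fun z => ∏ i, (z - p i) ^ a i) G) (k : ι) : a k = 0 := by
  by_contra hk
  set V := connectedComponentIn Gᶜ (p k) with hV
  have hVo : IsOpen V := hG.isOpen_compl.connectedComponentIn
  have hVG : V ⊆ Gᶜ := connectedComponentIn_subset _ _
  have hkV : p k ∈ V := mem_connectedComponentIn (hp k)
  have hfr : frontier V ⊆ G := frontier_component_subset hG _
  obtain ⟨g, hgc, hg⟩ := hlog
  obtain ⟨g', hg'⟩ := ContinuousMap.exists_restrict_eq hG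
    (⟨G.domRestrict g, continuousOn_iff_continuous_domRestrict.1 hgc⟩ : C(G, ℂ))
  have hg'G : ∀ z ∈ G, g' z = g z := fun z hz => congrArg (fun f => f ⟨z, hz⟩) hg'
  have hne : ∀ z ∈ closure V, ∀ i ≠ k, z - p i ≠ 0 := by
    intro z hz i hi h0
    rw [sub_eq_zero] at h0
    by_cases hzV : z ∈ V
    · exact hinj k i (Ne.symm hi) (h0 ▸ hzV)
    · exact hp i (h0 ▸ hfr ⟨hz, by rwa [hVo.interior_eq]⟩)
  have hnek : ∀ z ∈ Vᶜ, z - p k ≠ 0 := fun z hz h0 => hz ((sub_eq_zero.1 h0) ▸ hkV)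
  let Q : ℂ → ℂ := fun z => ∏ i ∈ Finset.univ.erase k, (z - p i) ^ a i
  have hQ0 : ∀ z ∈ closure V, Q z ≠ 0 := fun z hz =>
    Finset.prod_ne_zero_iff.2 fun i hi => zpow_ne_zero _ (hne z hz i (Finset.ne_of_mem_erase hi))
  classical
  let H : ℂ → ℂ := fun z => if z ∈ V then Complex.exp (g' z) / Q z else (z - p k) ^ a k
  have hHc : ∀ z ∈ Vᶜ, H z = (z - p k) ^ a k := fun z hz => if_neg hz
  have hHV : ∀ z ∈ closure V, H z = Complex.exp (g' z) / Q z := by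
    intro z hz
    by_cases hzV : z ∈ V
    · exact if_pos hzV
    · have hzG : z ∈ G := hfr ⟨hz, by rwa [hVo.interior_eq]⟩
      rw [hHc z hzV, hg'G z hzG, hg z hzG, eq_div_iff (hQ0 z hz)]
      exact Finset.mul_prod_erase Finset.univ (fun i => (z - p i) ^ a i) (Finset.mem_univ k)
  have hH : Continuous H := by
    have hu : closure V ∪ Vᶜ = univ := by
      rw [eq_univ_iff_forall]
      intro z
      by_cases h : z ∈ V
      · exact Or.inl (subset_closure h)
      · exact Or.inr h
    rw [← continuousOn_univ, ← hu]
    refine ContinuousOn.union_of_isClosed ?_ ?_ isClosed_closure hVo.isClosed_compl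
    · refine ContinuousOn.congr ?_ hHV
      refine ContinuousOn.div (by fun_prop) ?_ hQ0
      refine continuousOn_finsetProd _ fun i hi => ?_
      exact ContinuousOn.zpow₀ (by fun_prop) _ fun z hz =>
        Or.inl (hne z hz i (Finset.ne_of_mem_erase hi))
    · refine ContinuousOn.congr ?_ hHc
      exact ContinuousOn.zpow₀ (by fun_prop) _ fun z hz => Or.inl (hnek z hz)
  have hH0 : ∀ z, H z ≠ 0 := by
    intro z
    by_cases h : z ∈ V
    · rw [hHV z (subset_closure h)]
      exact div_ne_zero (Complex.exp_ne_zero _) (hQ0 z (subset_closure h))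
    · rw [hHc z h]
      exact zpow_ne_zero _ (hnek z h)
  obtain ⟨R, hR, hVR⟩ := (hb.subset hVG).subset_ball_lt 0 (p k)
  have hs : sphere (p k) R ⊆ Vᶜ := fun z hz hzV => by
    have := hVR hzV
    rw [mem_ball] at this
    rw [mem_sphere] at hz
    exact absurd hz this.ne
  obtain ⟨h, hh, hhe⟩ := HasLog.of_continuous hH hH0
  exact not_hasLog_zpow hR hk hs
    ⟨h, hh.mono (subset_univ _), fun z hz => by rw [hhe z trivial, hHc z hz]⟩

/-- More integer unknowns than equations: a nontrivial solution exists. -/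
theorem exists_int_relation {α β : Type*} [Fintype α] [Fintype β]
    (h : Fintype.card α < Fintype.card β) (A : α → β → ℤ) :
    ∃ t : β → ℤ, t ≠ 0 ∧ ∀ i, ∑ j, A i j * t j = 0 := by
  by_contra! hcon
  have : Function.Injective (Matrix.mulVecLin (Matrix.of A)) := by
    rw [← LinearMap.ker_eq_bot, LinearMap.ker_eq_bot']
    intro t ht
    by_contra h0
    obtain ⟨i, hi⟩ := hcon t h0
    exact hi (congrFun ht i)
  exact absurd (card_le_of_injective ℤ _ this) (not_le.2 h)

/-- Local finiteness. Let `G` be closed with bounded complement and locally connected along the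
circle `‖z‖ = s`. Only finitely many components of `Gᶜ` join the disc of radius `δ < s` to the
complement of the disc of radius `r > s`. For such a component take a point `w` inside and a point
`w'` outside; `z - w` then has a logarithm on the inner part of `G` (push the pole to `w'`), and
`(z - w) / z` has one on the outer part. The difference is a logarithm of `z` near the circle, and
two of these differ there by one integer on each of finitely many connected sets. With enough
components some integer combination of the defects vanishes, so that a nontrivial product of powers
of the `z - w` has a logarithm on `G`, against `log_independence`. -/
theorem finite_components_annulus {G : Set ℂ} (hG : IsClosed G) (hb : Bornology.IsBounded Gᶜ)
    {δ s r : ℝ} (hδ : 0 < δ) (hδs : δ < s) (hsr : s < r)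
    (hlc : ∀ x ∈ G, ‖x‖ = s → ∃ N ⊆ G, (∀ z ∈ N, δ < ‖z‖ ∧ ‖z‖ < r) ∧ IsPreconnected N ∧
      N ∈ 𝓝[G] x) :
    {W : Set ℂ | ∃ w ∈ Gᶜ, ‖w‖ < δ ∧ W = connectedComponentIn Gᶜ w ∧ ¬ W ⊆ ball 0 r}.Finite := by
  classical
  by_contra hinf
  choose! N hNG hNann hNc hNn using hlc
  have hcomp : IsCompact (G ∩ sphere 0 s) := (isCompact_sphere 0 s).inter_left hG
  have hmem : ∀ x ∈ G ∩ sphere (0 : ℂ) s, x ∈ G ∧ ‖x‖ = s := fun x hx => ⟨hx.1, by simpa using hx.2⟩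
  obtain ⟨t, htS, ht⟩ := hcomp.elim_nhdsWithin_subcover N
    (fun x hx => nhdsWithin_mono _ inter_subset_left (hNn x hx.1 (hmem x hx).2))
  let W := Set.Infinite.natEmbedding _ hinf
  have hW := fun n => (W n).2
  simp only [mem_ofPred_eq, not_subset] at hW
  choose w hwG hwδ hWw w' hw'W hw'r using hW
  have hw'r : ∀ n, r ≤ ‖w' n‖ := fun n => by simpa using hw'r n
  have hw'c : ∀ n, w' n ∈ connectedComponentIn Gᶜ (w n) := fun n => hWw n ▸ hw'W n
  have hw'G : ∀ n, w' n ∉ G := fun n => connectedComponentIn_subset _ _ (hw'c n)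
  have hw'0 : ∀ n, w' n ≠ 0 := fun n => norm_pos_iff.1 (by linarith [hw'r n])
  have hsubne : ∀ {x z : ℂ}, x ∉ G → z ∈ G → z - x ≠ 0 := fun hx hz h =>
    hx ((sub_eq_zero.1 h) ▸ hz)
  have hz0 : ∀ z : ℂ, δ < ‖z‖ → z ≠ 0 := fun z hz => norm_pos_iff.1 (by linarith)
  have hfar : ∀ n, HasLog (fun z => (z - w n) / z) {z | δ < ‖z‖} := by
    intro n
    refine HasLog.congr (f := fun z => 1 + (-w n) / z) (HasLog.one_add ?_ ?_) ?_
    · exact continuousOn_const.div (by fun_prop) fun z hz => hz0 z hz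
    · intro z hz
      have hz : δ < ‖z‖ := hz
      rw [norm_div, norm_neg, div_lt_one (by linarith)]
      linarith [hwδ n]
    · intro z hz
      have := hz0 z hz
      field_simp
      ring
  have hnear : ∀ n, HasLog (fun z => z - w n) (G ∩ {z | ‖z‖ < r}) := by
    intro n
    have h1 : HasLog (fun z => 1 + (-z) / w' n) {z | ‖z‖ < r} := by
      refine HasLog.one_add (by fun_prop) ?_
      intro z hz
      have hz : ‖z‖ < r := hz
      rw [norm_div, norm_neg, div_lt_one (by linarith [hw'r n])]
      linarith [hw'r n]
    have h2 : HasLog (fun _ => -w' n) {z | ‖z‖ < r} :=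
      ⟨fun _ => Complex.log (-w' n), continuousOn_const, fun z _ =>
        Complex.exp_log (neg_ne_zero.2 (hw'0 n))⟩
    obtain ⟨u, hu, hue⟩ := h1.mul h2
    obtain ⟨v, hv, hve⟩ := hasLog_div_of_mem_component hG (hw'c n)
    refine HasLog.congr (HasLog.mul ⟨u, hu.mono inter_subset_right, fun z hz => hue z hz.2⟩
      ⟨v, hv.mono inter_subset_left, fun z hz => hve z hz.1⟩) ?_
    intro z hz
    have h3 := hw'0 n
    have h4 := hsubne (hw'G n) hz.1
    field_simp
    ring
  choose l hl hle using hfar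
  choose v hv hve using hnear
  -- the integer defects on the sets covering the circle
  have hdefect : ∀ n, ∀ x ∈ t, ∃ d : ℤ, ∀ z ∈ N x,
      (v n z - l n z) - (v 0 z - l 0 z) = d * (2 * Real.pi * Complex.I) := by
    intro n x hx
    have hxS := hmem x (htS x hx)
    have hA : N x ⊆ {z | δ < ‖z‖} := fun z hz => (hNann x hxS.1 hxS.2 z hz).1
    have hB : N x ⊆ G ∩ {z | ‖z‖ < r} := fun z hz =>
      ⟨hNG x hxS.1 hxS.2 hz, (hNann x hxS.1 hxS.2 z hz).2⟩
    refine exists_int_of_exp_eq_one (hNc x hxS.1 hxS.2) ?_ ?_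
    · exact (((hv n).mono hB).sub ((hl n).mono hA)).sub (((hv 0).mono hB).sub ((hl 0).mono hA))
    · intro z hz
      rw [Complex.exp_sub, Complex.exp_sub, Complex.exp_sub, hve n z (hB hz), hve 0 z (hB hz),
        hle n z (hA hz), hle 0 z (hA hz)]
      have h1 := hz0 z (hA hz)
      have h2 := hsubne (hwG n) (hB hz).1
      have h3 := hsubne (hwG 0) (hB hz).1
      field_simp
  choose! d hd using hdefect
  let ι := Fin (t.card + 2)
  -- the extra equation makes the exponents sum to zero
  obtain ⟨a, ha0, ha⟩ := exists_int_relation (α := Option t) (β := ι) (by simp [ι])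
    (fun o n => o.elim 1 (fun x => d n x))
  have hsum : ∑ n, a n = 0 := by simpa using ha none
  have hsumd : ∀ x ∈ t, ∑ n : ι, d n x * a n = 0 := fun x hx => by simpa using ha (some ⟨x, hx⟩)
  apply ha0
  funext k
  refine log_independence hG hb (p := fun n : ι => w n) (fun n => hwG n) ?_ ?_ k
  · intro i j hij hmem
    apply hij
    have : W i = W j := by
      apply Subtype.ext
      rw [hWw i, hWw j, connectedComponentIn_eq hmem]
    exact Fin.ext (W.injective this)
  have hagree : ∀ z ∈ G, ‖z‖ = s → ∑ n : ι, a n * l n z = ∑ n : ι, a n * v n z := by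
    intro z hz hzs
    obtain ⟨x, hx, hzx⟩ := mem_iUnion₂.1 (ht ⟨hz, by simpa using hzs⟩)
    have h1 : ∑ n : ι, (a n : ℂ) * (v n z - l n z) = 0 := by
      calc ∑ n : ι, (a n : ℂ) * (v n z - l n z)
          = ∑ n : ι, ((d n x * a n : ℤ) : ℂ) * (2 * Real.pi * Complex.I)
              + ∑ n : ι, (a n : ℂ) * (v 0 z - l 0 z) := by
            rw [← Finset.sum_add_distrib]
            refine Finset.sum_congr rfl fun n _ => ?_
            push_cast
            linear_combination (a n : ℂ) * hd n x hx z hzx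
        _ = 0 := by
            rw [← Finset.sum_mul, ← Finset.sum_mul, ← Int.cast_sum, ← Int.cast_sum,
              hsumd x hx, hsum]
            simp
    simp only [mul_sub, Finset.sum_sub_distrib] at h1
    exact (sub_eq_zero.1 h1).symm
  let L : ℂ → ℂ := fun z => if s ≤ ‖z‖ then ∑ n : ι, a n * l n z else ∑ n : ι, a n * v n z
  have hL1 : ∀ z ∈ G ∩ {z | s ≤ ‖z‖}, L z = ∑ n : ι, a n * l n z := fun z hz => if_pos hz.2
  have hL2 : ∀ z ∈ G ∩ {z | ‖z‖ ≤ s}, L z = ∑ n : ι, a n * v n z := by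
    intro z hz
    by_cases h : s ≤ ‖z‖
    · rw [hL1 z ⟨hz.1, h⟩, hagree z hz.1 (le_antisymm hz.2 h)]
    · exact if_neg h
  have hcl1 : IsClosed (G ∩ {z | s ≤ ‖z‖}) := hG.inter (isClosed_le continuous_const continuous_norm)
  have hcl2 : IsClosed (G ∩ {z | ‖z‖ ≤ s}) := hG.inter (isClosed_le continuous_norm continuous_const)
  have hun : G = G ∩ {z | s ≤ ‖z‖} ∪ G ∩ {z | ‖z‖ ≤ s} := by
    ext z
    have := le_total s ‖z‖
    simp only [mem_union, mem_inter_iff, mem_ofPred_eq]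
    tauto
  refine ⟨L, ?_, ?_⟩
  · rw [hun]
    refine ContinuousOn.union_of_isClosed ?_ ?_ hcl1 hcl2
    · refine ContinuousOn.congr ?_ hL1
      refine continuousOn_finsetSum _ fun n _ => continuousOn_const.mul ((hl n).mono ?_)
      exact fun z hz => lt_of_lt_of_le hδs hz.2
    · refine ContinuousOn.congr ?_ hL2
      refine continuousOn_finsetSum _ fun n _ => continuousOn_const.mul ((hv n).mono ?_)
      exact fun z hz => ⟨hz.1, lt_of_le_of_lt hz.2 hsr⟩
  · intro z hz
    by_cases h : s ≤ ‖z‖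
    · have hzδ : δ < ‖z‖ := lt_of_lt_of_le hδs h
      rw [hL1 z ⟨hz, h⟩, Complex.exp_sum]
      calc ∏ n : ι, Complex.exp (a n * l n z)
          = ∏ n : ι, (z - w n) ^ a n / z ^ a n := by
            refine Finset.prod_congr rfl fun n _ => ?_
            rw [Complex.exp_int_mul, hle n z hzδ, div_zpow]
        _ = (∏ n : ι, (z - w n) ^ a n) / z ^ ∑ n : ι, a n := by
            rw [Finset.prod_div_distrib]
            congr 1
            have hind : ∀ S : Finset ι, ∏ n ∈ S, z ^ a n = z ^ ∑ n ∈ S, a n := fun S => by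
              induction S using Finset.induction_on with
              | empty => simp
              | insert i S hi ih =>
                rw [Finset.prod_insert hi, Finset.sum_insert hi, ih, zpow_add₀ (hz0 z hzδ)]
            exact hind Finset.univ
        _ = _ := by rw [hsum, zpow_zero, div_one]
    · rw [hL2 z ⟨hz, (not_le.1 h).le⟩, Complex.exp_sum]
      refine Finset.prod_congr rfl fun n _ => ?_
      rw [Complex.exp_int_mul, hve n z ⟨hz, (not_le.1 h).trans hsr⟩]

/-! ### Local connectedness and complementary components -/

/-- Local connectedness of the subspace `F`, phrased in the ambient space: every point of `F` has
arbitrarily small preconnected neighbourhoods relative to `F`. -/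
def LocConn {X : Type*} [TopologicalSpace X] (F : Set X) : Prop :=
  ∀ x ∈ F, ∀ O ∈ 𝓝 x, ∃ N ⊆ F, N ⊆ O ∧ IsPreconnected N ∧ N ∈ 𝓝[F] x

theorem locallyConnectedSpace_iff_locConn {X : Type*} [TopologicalSpace X] (F : Set X) :
    LocallyConnectedSpace F ↔ LocConn F := by
  rw [locallyConnectedSpace_iff_connected_subsets]
  constructor
  · intro h x hx O hO
    obtain ⟨V, hV, hVc, hVO⟩ := h ⟨x, hx⟩ ((↑) ⁻¹' O) (continuous_subtype_val.continuousAt hO)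
    refine ⟨(↑) '' V, Subtype.coe_image_subset _ _, by simpa using hVO,
      hVc.image _ continuous_subtype_val.continuousOn, ?_⟩
    have := image_mem_map (m := ((↑) : F → X)) hV
    rwa [map_nhds_subtype_val] at this
  · rintro h ⟨x, hx⟩ U hU
    obtain ⟨O, hO, hOU⟩ := mem_nhds_subtype F ⟨x, hx⟩ U |>.1 hU
    obtain ⟨N, hNF, hNO, hN, hNx⟩ := h x hx O hO
    refine ⟨(↑) ⁻¹' N, ?_, ?_, (preimage_mono hNO).trans hOU⟩
    · exact preimage_coe_mem_nhds_subtype.2 hNx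
    · rw [← IsInducing.subtypeVal.isPreconnected_image, Subtype.image_preimage_coe,
        inter_eq_self_of_subset_right hNF]
      exact hN

theorem isClosed_connectedComponentIn {X : Type*} [TopologicalSpace X] {F : Set X}
    (hF : IsClosed F) (x : X) : IsClosed (connectedComponentIn F x) := by
  by_cases hx : x ∈ F
  · refine isClosed_of_closure_subset ?_
    exact isPreconnected_connectedComponentIn.closure.subset_connectedComponentIn
      (subset_closure (mem_connectedComponentIn hx))
      (closure_minimal (connectedComponentIn_subset _ _) hF)
  · rw [connectedComponentIn_eq_empty hx]; exact isClosed_empty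

/-- In a connected space, removing a component of the complement of a connected set leaves a
connected set. -/
theorem isPreconnected_compl_component {X : Type*} [TopologicalSpace X] [PreconnectedSpace X]
    {W : Set X} (hW : IsOpen W) (hWc : IsPreconnected W) {x : X} (hx : x ∉ W) :
    IsPreconnected (connectedComponentIn Wᶜ x)ᶜ := by
  set B := connectedComponentIn Wᶜ x with hB
  have hBcl : IsClosed B := isClosed_connectedComponentIn hW.isClosed_compl x
  have hxB : x ∈ B := mem_connectedComponentIn hx
  have hWB : W ⊆ Bᶜ := fun z hz hzB => connectedComponentIn_subset _ _ hzB hz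
  -- the key case: `W` lies on one side of the separation
  have key : ∀ u v : Set X, IsOpen u → IsOpen v → Bᶜ ⊆ u ∪ v → Bᶜ ∩ (u ∩ v) = ∅ → W ⊆ u →
      Bᶜ ⊆ u := by
    intro u v hu hv huv hd hWu
    have hS : IsClosed (B ∪ (Bᶜ ∩ v)) := by
      have : (B ∪ (Bᶜ ∩ v)) = (Bᶜ ∩ u)ᶜ := by
        ext z
        have h1 := @huv z
        have h2 : z ∉ Bᶜ ∩ (u ∩ v) := by rw [hd]; exact fun h => h
        simp only [mem_union, mem_inter_iff, mem_compl_iff] at *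
        tauto
      rw [this]
      exact (hBcl.isOpen_compl.inter hu).isClosed_compl
    have hSW : B ∪ (Bᶜ ∩ v) ⊆ Wᶜ := by
      rintro z (hz | ⟨hz, hzv⟩) hzW
      · exact hWB hzW hz
      · have : z ∈ Bᶜ ∩ (u ∩ v) := ⟨hz, hWu hzW, hzv⟩
        rw [hd] at this; exact this
    have hSc : IsPreconnected (B ∪ (Bᶜ ∩ v)) := by
      have aux : ∀ E E' : Set X, IsClosed E → IsClosed E' → B ∪ (Bᶜ ∩ v) ⊆ E ∪ E' → Disjoint E E' →
          B ⊆ E → B ∪ (Bᶜ ∩ v) ⊆ E := by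
        intro E E' hE hE' hc hdj hBE
        have heq : (B ∪ (Bᶜ ∩ v)) ∩ E' = (Bᶜ ∩ v) ∩ Eᶜ := by
          ext z
          have h1 := @hc z
          have h2 := @hBE z
          have h3 : z ∈ E → z ∉ E' := fun h => disjoint_left.1 hdj h
          simp only [mem_union, mem_inter_iff, mem_compl_iff] at *
          tauto
        have hclop : IsClopen ((B ∪ (Bᶜ ∩ v)) ∩ E') :=
          ⟨hS.inter hE', by rw [heq]; exact (hBcl.isOpen_compl.inter hv).inter hE.isOpen_compl⟩
        rcases isClopen_iff.1 hclop with h | h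
        · intro z hz
          rcases hc hz with h' | h'
          · exact h'
          · exact absurd (show z ∈ (B ∪ (Bᶜ ∩ v)) ∩ E' from ⟨hz, h'⟩) (by rw [h]; exact fun h => h)
        · have : x ∈ (B ∪ (Bᶜ ∩ v)) ∩ E' := by rw [h]; trivial
          rw [heq] at this
          exact absurd hxB this.1.1
      rw [isPreconnected_iff_subset_of_fully_disjoint_closed hS]
      intro E E' hE hE' hc hdj
      have hBc : IsPreconnected B := isPreconnected_connectedComponentIn
      rcases (isPreconnected_iff_subset_of_fully_disjoint_closed hBcl).1 hBc E E' hE hE'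
        (subset_union_left.trans hc) hdj with h | h
      · exact Or.inl (aux E E' hE hE' hc hdj h)
      · exact Or.inr (aux E' E hE' hE (by rwa [union_comm E' E]) hdj.symm h)
    have hSB : B ∪ (Bᶜ ∩ v) ⊆ B := hSc.subset_connectedComponentIn (Or.inl hxB) hSW
    intro z hz
    rcases huv hz with h | h
    · exact h
    · exact absurd (hSB (Or.inr ⟨hz, h⟩)) hz
  rw [isPreconnected_iff_subset_of_disjoint]
  intro u v hu hv huv hd
  have hd' : W ∩ (u ∩ v) = ∅ := subset_empty_iff.1 (hd ▸ inter_subset_inter_left _ hWB)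
  rcases isPreconnected_iff_subset_of_disjoint.1 hWc u v hu hv (hWB.trans huv) hd' with h | h
  · exact Or.inl (key u v hu hv huv hd h)
  · exact Or.inr (key v u hv hu (by rwa [union_comm]) (by rwa [inter_comm v u]) h)

/-- A component of the complement of a plane domain has connected frontier. -/
theorem isPreconnected_frontier_component {W : Set ℂ} (hW : IsOpen W) (hWc : IsPreconnected W)
    {x : ℂ} (hx : x ∉ W) :
    IsPreconnected (frontier (connectedComponentIn Wᶜ x)) := by
  have hB := isClosed_connectedComponentIn hW.isClosed_compl x
  rw [frontier_eq_closure_inter_closure, hB.closure_eq]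
  refine unicoherent_plane hB isClosed_closure isPreconnected_connectedComponentIn
    (isPreconnected_compl_component hW hWc hx).closure ?_
  exact eq_univ_of_forall fun z => by
    by_cases h : z ∈ connectedComponentIn Wᶜ x
    · exact Or.inl h
    · exact Or.inr (subset_closure h)

/-- A point of a component `B` of `Wᶜ` off `closure W` has a connected neighbourhood off `closure W`,
which then lies in `B`. -/
theorem frontier_component_compl_subset {W : Set ℂ} (hW : IsOpen W) (x : ℂ) :
    frontier (connectedComponentIn Wᶜ x) ⊆ frontier W := by
  have hB := isClosed_connectedComponentIn hW.isClosed_compl x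
  rw [hB.frontier_eq, hW.frontier_eq]
  rintro z ⟨hz, hzi⟩
  refine ⟨?_, connectedComponentIn_subset _ _ hz⟩
  by_contra hcl
  refine hzi (mem_interior.2 ⟨connectedComponentIn (closure W)ᶜ z, ?_,
    isClosed_closure.isOpen_compl.connectedComponentIn, mem_connectedComponentIn hcl⟩)
  rw [connectedComponentIn_eq hz]
  exact connectedComponentIn_mono _ (compl_subset_compl.2 subset_closure)

theorem inter_closure_subset_frontier {W : Set ℂ} (hW : IsOpen W) (x : ℂ) :
    connectedComponentIn Wᶜ x ∩ closure W ⊆ frontier (connectedComponentIn Wᶜ x) := by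
  have hB := isClosed_connectedComponentIn hW.isClosed_compl x
  rintro z ⟨hz, hzW⟩
  rw [frontier_eq_closure_inter_closure]
  exact ⟨subset_closure hz, closure_mono (fun w hw h => (connectedComponentIn_subset _ _ h : w ∈ Wᶜ) hw) hzW⟩

/-- Only finitely many unbounded components of the complement of a locally connected closed plane
set meet a given disc. -/
theorem finite_unbounded_components {F : Set ℂ} (hF : IsClosed F) (hlc : LocConn F) :
    {W : Set ℂ | ∃ w ∈ Fᶜ, ‖w‖ < 1 ∧ W = connectedComponentIn Fᶜ w ∧
      ¬ Bornology.IsBounded W}.Finite := by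
  set G : Set ℂ := F ∪ (ball 0 4)ᶜ with hGdef
  have hG : IsClosed G := hF.union isOpen_ball.isClosed_compl
  have hGc : Gᶜ = Fᶜ ∩ ball 0 4 := by rw [hGdef, compl_union, compl_compl]
  have hb : Bornology.IsBounded Gᶜ := by
    rw [hGc]; exact isBounded_ball.subset inter_subset_right
  have hfin := finite_components_annulus hG hb (δ := 1) (s := 2) (r := 3) one_pos
    (by norm_num) (by norm_num) (by
      intro x hx hxs
      have hxF : x ∈ F := by
        rcases hx with h | h
        · exact h
        · exfalso; apply h; rw [mem_ball_zero_iff]; linarith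
      have hO : {z : ℂ | 1 < ‖z‖ ∧ ‖z‖ < 3} ∈ 𝓝 x :=
        ((isOpen_lt continuous_const continuous_norm).inter
          (isOpen_lt continuous_norm continuous_const)).mem_nhds
          ⟨show 1 < ‖x‖ by linarith, show ‖x‖ < 3 by linarith⟩
      obtain ⟨N, hNF, hNO, hN, hNx⟩ := hlc x hxF _ hO
      refine ⟨N, hNF.trans subset_union_left, fun z hz => hNO hz, hN, ?_⟩
      have hball : ball (0 : ℂ) 4 ∈ 𝓝 x :=
        isOpen_ball.mem_nhds (by rw [mem_ball_zero_iff]; linarith)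
      rw [mem_nhdsWithin_iff_eventually] at hNx ⊢
      filter_upwards [hNx, hball] with z hz hz4 hzG
      rcases hzG with h | h
      · exact hz h
      · exact absurd hz4 h)
  refine (hfin.image fun W' => ⋃ z ∈ W', connectedComponentIn Fᶜ z).subset ?_
  rintro W ⟨w, hw, hw1, rfl, hunb⟩
  have hwG : w ∈ Gᶜ := by
    rw [hGc]; exact ⟨hw, by rw [mem_ball_zero_iff]; linarith⟩
  have hsub : connectedComponentIn Gᶜ w ⊆ connectedComponentIn Fᶜ w :=
    connectedComponentIn_mono _ (by rw [hGc]; exact inter_subset_left)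
  refine ⟨connectedComponentIn Gᶜ w, ⟨w, hwG, hw1, rfl, ?_⟩, ?_⟩
  · intro hball
    apply hunb
    refine isBounded_ball.subset (Subset.trans ?_ hball)
    refine isPreconnected_connectedComponentIn.subset_of_closure_inter_subset
      hG.isOpen_compl.connectedComponentIn
      ⟨w, mem_connectedComponentIn hw, mem_connectedComponentIn hwG⟩ ?_
    rintro z ⟨hz, hzF⟩
    by_contra hzn
    have hzf : z ∈ frontier (connectedComponentIn Gᶜ w) := by
      rw [hG.isOpen_compl.connectedComponentIn.frontier_eq]; exact ⟨hz, hzn⟩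
    rcases frontier_component_subset hG w hzf with h | h
    · exact connectedComponentIn_subset _ _ hzF h
    · have : z ∈ closedBall (0 : ℂ) 3 :=
        closure_minimal (hball.trans ball_subset_closedBall) isClosed_closedBall hz
      rw [mem_closedBall_zero_iff] at this
      apply h; rw [mem_ball_zero_iff]; linarith
  · apply Subset.antisymm
    · refine iUnion₂_subset fun z hz => ?_
      rw [connectedComponentIn_eq (hsub hz)]
    · exact subset_iUnion₂_of_subset w (mem_connectedComponentIn hwG) Subset.rfl

/-! ### Charts of the sphere -/

instance fact_finrank_three : Fact (Module.finrank ℝ (EuclideanSpace ℝ (Fin 3)) = 2 + 1) :=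
  ⟨by simp⟩

instance locallyConnectedSpace_S2 : LocallyConnectedSpace S2 :=
  ChartedSpace.locallyConnectedSpace (EuclideanSpace ℝ (Fin 2)) S2

/-- The inverse of stereographic projection from `v` parametrizes `S² ∖ {v}` by the plane. -/
theorem exists_chart_compl (v : S2) : ∃ e : ℂ → S2, IsOpenEmbedding e ∧ range e = {v}ᶜ := by
  let st := (stereographic' 2 v).symm
  have hs : st.source = univ := by simp [st]
  have ht : st.target = {v}ᶜ := by simp [st]
  let L := Complex.orthonormalBasisOneI.repr.toHomeomorph
  refine ⟨st ∘ L, (st.isOpenEmbedding hs).comp L.isOpenEmbedding, ?_⟩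
  rw [L.surjective.range_comp, ← image_univ, ← hs, st.image_source_eq_target, ht]

/-- Each point of the sphere has charts centred at it with range in a prescribed neighbourhood. -/
theorem exists_small_chart (p : S2) {O : Set S2} (hO : O ∈ 𝓝 p) :
    ∃ e : ℂ → S2, IsOpenEmbedding e ∧ e 0 = p ∧ range e ⊆ O := by
  have hv : p ≠ -p := ne_neg_of_mem_unit_sphere ℝ p
  obtain ⟨e, he, hr⟩ := exists_chart_compl (-p)
  obtain ⟨c, hc⟩ : p ∈ range e := by rw [hr]; exact hv
  have : e ⁻¹' O ∈ 𝓝 c := he.continuous.continuousAt (by rwa [hc])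
  obtain ⟨r, hr0, hrO⟩ := Metric.mem_nhds_iff.1 this
  let b := OpenPartialHomeomorph.univBall (E := ℂ) c r
  have hb : b.source = univ := OpenPartialHomeomorph.univBall_source c r
  refine ⟨e ∘ b, he.comp (b.isOpenEmbedding hb), ?_, ?_⟩
  · simp [b, hc]
  · rw [range_comp, ← image_univ, ← hb, b.image_source_eq_target,
      OpenPartialHomeomorph.univBall_target c hr0]
    exact image_subset_iff.2 hrO

theorem LocConn.preimage {X Y : Type*} [TopologicalSpace X] [TopologicalSpace Y] {e : X → Y}
    (he : IsOpenEmbedding e) {K : Set Y} (hK : LocConn K) : LocConn (e ⁻¹' K) := by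
  intro x hx O hO
  obtain ⟨N, hNK, hNO, hN, hNx⟩ := hK (e x) hx (e '' O) (he.isOpenMap.image_mem_nhds hO)
  refine ⟨e ⁻¹' N, preimage_mono hNK, ?_, ?_, ?_⟩
  · rw [← he.injective.preimage_image (s := O)]; exact preimage_mono hNO
  · exact hN.preimage_of_isOpenMap he.injective he.isOpenMap
      (hNO.trans (image_subset_range _ _))
  · exact (he.continuous.continuousWithinAt.tendsto_nhdsWithin (mapsTo_preimage e K)) hNx

section chart
variable {Y : Type*} [TopologicalSpace Y] {e : ℂ → Y} {K : Set Y}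

theorem image_component_subset (he : Continuous e) {z : ℂ} (hz : e z ∉ K) :
    e '' connectedComponentIn (e ⁻¹' K)ᶜ z ⊆ connectedComponentIn Kᶜ (e z) := by
  refine (isPreconnected_connectedComponentIn.image _
    he.continuousOn).subset_connectedComponentIn
    ⟨z, mem_connectedComponentIn hz, rfl⟩ ?_
  rintro _ ⟨w, hw, rfl⟩
  have hwK : w ∈ (e ⁻¹' K)ᶜ := connectedComponentIn_subset _ _ hw
  exact fun h => absurd h hwK

/-- A bounded chart component is relatively compact, so its image is a full component of `Kᶜ`;
a component of `Kᶜ` that leaves the range of the chart has only unbounded chart components. -/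
theorem component_unbounded [T2Space Y] (he : IsOpenEmbedding e) (hK : IsClosed K) {z : ℂ}
    (hz : e z ∉ K) (hU : ¬ connectedComponentIn Kᶜ (e z) ⊆ range e) :
    ¬ Bornology.IsBounded (connectedComponentIn (e ⁻¹' K)ᶜ z) := by
  intro hb
  set W := connectedComponentIn (e ⁻¹' K)ᶜ z
  have hF : IsClosed (e ⁻¹' K) := hK.preimage he.continuous
  have hWo : IsOpen W := hF.isOpen_compl.connectedComponentIn
  apply hU
  refine Subset.trans ?_ (image_subset_range e W)
  refine isPreconnected_connectedComponentIn.subset_of_closure_inter_subset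
    (he.isOpenMap _ hWo) ⟨e z, mem_connectedComponentIn hz, z, mem_connectedComponentIn hz, rfl⟩ ?_
  rintro y ⟨hy, hyU⟩
  have hcl : closure (e '' W) ⊆ e '' closure W :=
    closure_minimal (image_mono subset_closure)
      (hb.isCompact_closure.image he.continuous).isClosed
  obtain ⟨w, hw, rfl⟩ := hcl hy
  by_contra hn
  have hwf : w ∈ frontier W := by
    rw [hWo.frontier_eq]; exact ⟨hw, fun h => hn ⟨w, h, rfl⟩⟩
  exact connectedComponentIn_subset _ _ hyU (frontier_component_subset hF z hwf)

end chart

/-! ### Components of the complement of a locally connected set -/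

/-- Condition (i): a component of diameter at least `ε` leaves every chart whose range has diameter
less than `ε`, and finitely many such charts suffice. -/
theorem finite_large_components {K : Set S2} (hK : IsClosed K) (hlc : LocConn K) {ε : ℝ}
    (hε : 0 < ε) :
    {U : Set S2 | (∃ w ∈ Kᶜ, U = connectedComponentIn Kᶜ w) ∧ ε ≤ Metric.diam U}.Finite := by
  have hch : ∀ p : S2, ∃ e : ℂ → S2, IsOpenEmbedding e ∧ e 0 = p ∧ range e ⊆ ball p (ε / 3) :=
    fun p => exists_small_chart p (ball_mem_nhds p (by positivity))
  choose e he he0 her using hch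
  obtain ⟨t, -, ht⟩ := isCompact_univ.elim_nhds_subcover (fun p => e p '' ball 0 1) (fun p _ => by
    have := (he p).isOpenMap.image_mem_nhds (ball_mem_nhds (0 : ℂ) one_pos)
    rwa [he0] at this)
  refine (t.finite_toSet.biUnion fun p _ => (finite_unbounded_components
    (hK.preimage (he p).continuous) (hlc.preimage (he p))).image
      fun W => ⋃ z ∈ W, connectedComponentIn Kᶜ (e p z)).subset ?_
  rintro U ⟨⟨w, hw, rfl⟩, hd⟩
  obtain ⟨p, hp, z, hz, rfl⟩ := mem_iUnion₂.1 (ht (mem_univ w))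
  refine mem_iUnion₂.2 ⟨p, hp, connectedComponentIn (e p ⁻¹' K)ᶜ z,
    ⟨z, hw, by simpa using hz, rfl, ?_⟩, ?_⟩
  · refine component_unbounded (he p) hK hw fun hU => ?_
    have : Metric.diam (connectedComponentIn Kᶜ (e p z)) ≤ 2 * (ε / 3) :=
      (Metric.diam_mono (hU.trans (her p)) isBounded_ball).trans (diam_ball (by positivity))
    linarith
  · apply Subset.antisymm
    · refine iUnion₂_subset fun y hy => ?_
      rw [connectedComponentIn_eq (image_component_subset (he p).continuous hw ⟨y, hy, rfl⟩)]
    · exact subset_iUnion₂_of_subset z (mem_connectedComponentIn hw) Subset.rfl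

/-- Condition (ii): near `x`, the frontier of a component `U` is a finite union of connected sets
through `x`, the frontiers of components of complements of chart components of `U`. -/
theorem locConn_frontier_component {K : Set S2} (hK : IsClosed K) (hlc : LocConn K) {u : S2}
    (hu : u ∈ Kᶜ) : LocConn (frontier (connectedComponentIn Kᶜ u)) := by
  set U := connectedComponentIn Kᶜ u with hUdef
  have hUo : IsOpen U := hK.isOpen_compl.connectedComponentIn
  have huU : u ∈ U := mem_connectedComponentIn hu
  have hfK : frontier U ⊆ K := frontier_component_subset hK u
  intro x hx O hO
  have hxK := hfK hx
  have hxu : 0 < dist u x := dist_pos.2 (by rintro rfl; exact hu hxK)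
  obtain ⟨e, he, he0, her⟩ := exists_small_chart x (inter_mem hO (ball_mem_nhds x hxu))
  have hUr : ¬ U ⊆ range e := fun h => by
    have := (her (h huU)).2
    rw [mem_ball] at this; exact lt_irrefl _ this
  set F := e ⁻¹' K with hF
  have hFc : IsClosed F := hK.preimage he.continuous
  have h0F : (0 : ℂ) ∈ F := by rw [hF, mem_preimage, he0]; exact hxK
  obtain ⟨N, hNF, -, hN, hNx⟩ := hlc.preimage he 0 h0F univ univ_mem
  have h0N : (0 : ℂ) ∈ N := mem_of_mem_nhdsWithin h0F hNx
  have hfin := finite_unbounded_components hFc (hlc.preimage he)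
  set S := {W : Set ℂ | ∃ w ∈ Fᶜ, ‖w‖ < 1 ∧ W = connectedComponentIn Fᶜ w ∧
      ¬ Bornology.IsBounded W} with hS
  have hSo : ∀ W ∈ S, IsOpen W ∧ IsPreconnected W ∧ W ⊆ Fᶜ := by
    rintro W ⟨w, hw, -, rfl, -⟩
    exact ⟨hFc.isOpen_compl.connectedComponentIn, isPreconnected_connectedComponentIn,
      connectedComponentIn_subset _ _⟩
  have h0W : ∀ W ∈ S, (0 : ℂ) ∉ W := fun W hW h => (hSo W hW).2.2 h h0F
  -- the frontier of the chart image of `U` near `0` is made of these connected pieces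
  let T : Set ℂ := ⋃ W ∈ {W ∈ S | W ⊆ e ⁻¹' U ∧ 0 ∈ closure W},
    frontier (connectedComponentIn Wᶜ 0)
  have hTc : IsPreconnected T := by
    have hTs : T = ⋃₀ ((fun W => frontier (connectedComponentIn Wᶜ 0)) ''
        {W ∈ S | W ⊆ e ⁻¹' U ∧ 0 ∈ closure W}) := by rw [sUnion_image]
    rw [hTs]
    refine isPreconnected_sUnion 0 _ ?_ ?_
    · rintro _ ⟨W, ⟨hW, -, h0⟩, rfl⟩
      exact inter_closure_subset_frontier (hSo W hW).1 0
        ⟨mem_connectedComponentIn (h0W W hW), h0⟩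
    · rintro _ ⟨W, ⟨hW, -, h0⟩, rfl⟩
      exact isPreconnected_frontier_component (hSo W hW).1 (hSo W hW).2.1 (h0W W hW)
  have hWfr : ∀ W ∈ S, frontier W ⊆ F := by
    rintro W ⟨w, hw, -, rfl, -⟩; exact frontier_component_subset hFc w
  have hpre : e ⁻¹' frontier U = frontier (e ⁻¹' U) :=
    he.isOpenMap.preimage_frontier_eq_frontier_preimage he.continuous U
  have hUFc : e ⁻¹' U ⊆ Fᶜ := fun z hz => (connectedComponentIn_subset _ _ hz : e z ∈ Kᶜ)
  have hTsub : T ⊆ e ⁻¹' frontier U := by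
    refine iUnion₂_subset fun W hW => (frontier_component_compl_subset (hSo W hW.1).1 0).trans ?_
    intro z hz
    rw [hpre, (hUo.preimage he.continuous).frontier_eq]
    exact ⟨closure_mono hW.2.1 (frontier_subset_closure hz), fun h => hUFc h (hWfr W hW.1 hz)⟩
  have hcov : e ⁻¹' U ∩ ball 0 1 ⊆ ⋃ W ∈ {W ∈ S | W ⊆ e ⁻¹' U}, W := by
    rintro z ⟨hz, hz1⟩
    have hzF : z ∈ Fᶜ := hUFc hz
    have hUz : U = connectedComponentIn Kᶜ (e z) := connectedComponentIn_eq hz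
    refine mem_iUnion₂.2 ⟨connectedComponentIn Fᶜ z, ⟨⟨z, hzF, by simpa using hz1, rfl, ?_⟩, ?_⟩,
      mem_connectedComponentIn hzF⟩
    · exact component_unbounded he hK hzF (by rwa [← hUz])
    · rw [hUz]; exact image_subset_iff.1 (image_component_subset he.continuous hzF)
  have hTn : T ∈ 𝓝[e ⁻¹' frontier U] 0 := by
    have hopen : (⋂ W ∈ {W ∈ S | 0 ∉ closure W}, (closure W)ᶜ) ∈ 𝓝 (0 : ℂ) := by
      rw [biInter_mem (hfin.subset (sep_subset _ _))]
      exact fun W hW => isClosed_closure.isOpen_compl.mem_nhds hW.2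
    rw [mem_nhdsWithin_iff_eventually] at hNx ⊢
    filter_upwards [hNx, ball_mem_nhds (0 : ℂ) one_pos, hopen] with z hzN hz1 hzo hzf
    have hzF : z ∈ F := hfK hzf
    have hzcl : z ∈ closure (e ⁻¹' U ∩ ball 0 1) := by
      rw [hpre] at hzf
      rw [inter_comm]
      exact isOpen_ball.inter_closure ⟨hz1, frontier_subset_closure hzf⟩
    have := closure_mono hcov hzcl
    rw [Set.Finite.closure_biUnion (hfin.subset (sep_subset _ _))] at this
    obtain ⟨W, ⟨hW, hWU⟩, hzW⟩ := mem_iUnion₂.1 this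
    have h0cl : 0 ∈ closure W := by
      by_contra h
      exact (mem_iInter₂.1 hzo W ⟨hW, h⟩) hzW
    refine mem_iUnion₂.2 ⟨W, ⟨hW, hWU, h0cl⟩, inter_closure_subset_frontier (hSo W hW).1 0
      ⟨?_, hzW⟩⟩
    exact hN.subset_connectedComponentIn h0N
      (fun y hy h => (hSo W hW).2.2 h (hNF hy)) (hzN hzF)
  refine ⟨e '' T, image_subset_iff.2 hTsub, ?_, hTc.image _ he.continuous.continuousOn, ?_⟩
  · exact (image_subset_range _ _).trans (her.trans inter_subset_left)
  · rw [mem_nhdsWithin_iff_eventually] at hTn ⊢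
    have := he.isOpenMap.image_mem_nhds hTn
    rw [he0] at this
    filter_upwards [this]
    rintro _ ⟨z, hz, rfl⟩ hf
    exact ⟨z, hz hf, rfl⟩

/-- If `K` is connected and `U` is not the only component of `Kᶜ`, then `U` has connected frontier.
In the stereographic chart at a point of another component, `K` lies in a single component of the
complement of `U`, and this component has the same frontier as `U`. -/
theorem isPreconnected_frontier_of_ne {K : Set S2} (hK : IsClosed K) (hKc : IsConnected K)
    {u v : S2} (hv : v ∈ Kᶜ)
    (huv : connectedComponentIn Kᶜ u ≠ connectedComponentIn Kᶜ v) :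
    IsPreconnected (frontier (connectedComponentIn Kᶜ u)) := by
  obtain ⟨e, he, her⟩ := exists_chart_compl v
  set U := connectedComponentIn Kᶜ u with hUdef
  have hUo : IsOpen U := hK.isOpen_compl.connectedComponentIn
  have hsub : ∀ s : Set S2, v ∉ s → s ⊆ range e := by
    intro s hs y hy; rw [her]; rintro rfl; exact hs hy
  have hvU : v ∉ U := fun h => huv (connectedComponentIn_eq h)
  have hvf : v ∉ frontier U := fun h => hv (frontier_component_subset hK u h)
  set W := e ⁻¹' U with hW
  have hWo : IsOpen W := hUo.preimage he.continuous
  have hWc : IsPreconnected W := isPreconnected_connectedComponentIn.preimage_of_isOpenMap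
    he.injective he.isOpenMap (hsub _ hvU)
  have hFc : IsPreconnected (e ⁻¹' K) := hKc.isPreconnected.preimage_of_isOpenMap
    he.injective he.isOpenMap (hsub _ (fun h => hv h))
  obtain ⟨k, hk⟩ := hKc.nonempty
  obtain ⟨x, rfl⟩ := hsub K (fun h => hv h) hk
  have hFW : e ⁻¹' K ⊆ Wᶜ := fun z hz h => (connectedComponentIn_subset _ _ h : e z ∈ Kᶜ) hz
  have hpre : e ⁻¹' frontier U = frontier W :=
    he.isOpenMap.preimage_frontier_eq_frontier_preimage he.continuous U
  have heq : frontier W = frontier (connectedComponentIn Wᶜ x) := by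
    apply Subset.antisymm _ (frontier_component_compl_subset hWo x)
    intro z hz
    refine inter_closure_subset_frontier hWo x ⟨hFc.subset_connectedComponentIn hk hFW ?_,
      frontier_subset_closure hz⟩
    rw [← hpre] at hz
    exact frontier_component_subset hK u hz
  have : frontier U = e '' frontier W := by
    rw [← hpre, image_preimage_eq_of_subset (hsub _ hvf)]
  rw [this, heq]
  exact (isPreconnected_frontier_component hWo hWc (hFW hk)).image _ he.continuous.continuousOn

/-! ### Recovering local connectedness from the components -/

/-- If every component `U` of `Kᶜ` meeting the connected set `C` is traded for a connected part
`L U` of its frontier that contains `C ∩ frontier U`, then `C` remains connected. -/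
theorem isPreconnected_patch {X : Type*} [MetricSpace X] [BoundedSpace X]
    [LocallyConnectedSpace X] {K C : Set X} (hK : IsClosed K) (hC : IsPreconnected C)
    (hfin : ∀ ε : ℝ, 0 < ε → {U : Set X | (∃ w ∈ Kᶜ, U = connectedComponentIn Kᶜ w) ∧
      ε ≤ Metric.diam U}.Finite) {M : Set (Set X)}
    (hM : M = {U | (∃ w ∈ Kᶜ, U = connectedComponentIn Kᶜ w) ∧ (U ∩ C).Nonempty})
    (L : Set X → Set X) (hLn : ∀ U ∈ M, (L U).Nonempty) (hLf : ∀ U ∈ M, L U ⊆ frontier U)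
    (hLp : ∀ U ∈ M, IsPreconnected (L U)) (hCL : ∀ U ∈ M, C ∩ frontier U ⊆ L U) :
    IsPreconnected ((C ∩ K) ∪ ⋃ U ∈ M, L U) := by
  have hMo : ∀ U ∈ M, IsOpen U := by
    intro U hU
    rw [hM] at hU
    obtain ⟨⟨w, -, rfl⟩, -⟩ := hU
    exact hK.isOpen_compl.connectedComponentIn
  have hMK : ∀ U ∈ M, ∀ y ∈ U, y ∉ K := by
    intro U hU y hy
    rw [hM] at hU
    obtain ⟨⟨w, -, rfl⟩, -⟩ := hU
    exact (connectedComponentIn_subset _ _ hy : y ∈ Kᶜ)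
  have hMeq : ∀ U ∈ M, ∀ U' ∈ M, ∀ y ∈ U, y ∈ U' → U = U' := by
    intro U hU U' hU' y hy hy'
    rw [hM] at hU hU'
    obtain ⟨⟨w, -, rfl⟩, -⟩ := hU
    obtain ⟨⟨w', -, rfl⟩, -⟩ := hU'
    rw [connectedComponentIn_eq hy, connectedComponentIn_eq hy']
  rw [isPreconnected_iff_subset_of_disjoint_closed]
  intro P Q hP hQ hPQ hdisj
  have hLs : ∀ U ∈ M, L U ⊆ (C ∩ K) ∪ ⋃ U ∈ M, L U := fun U hU =>
    (subset_biUnion_of_mem (u := L) hU).trans subset_union_right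
  have hside : ∀ U ∈ M, L U ⊆ P ∨ L U ⊆ Q := fun U hU =>
    isPreconnected_iff_subset_of_disjoint_closed.1 (hLp U hU) P Q hP hQ ((hLs U hU).trans hPQ)
      (subset_empty_iff.1 (hdisj ▸ inter_subset_inter_left _ (hLs U hU)))
  have hnot : ∀ y ∈ (C ∩ K) ∪ ⋃ U ∈ M, L U, y ∈ P → y ∈ Q → False := fun y hy h1 h2 => by
    have : y ∈ ((C ∩ K) ∪ ⋃ U ∈ M, L U) ∩ (P ∩ Q) := ⟨hy, h1, h2⟩
    rw [hdisj] at this; exact this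
  -- the part of `C` attached to the closed set `P`
  let A : Set X → Set X := fun P => (C ∩ K ∩ P) ∪ ⋃ U ∈ {U ∈ M | L U ⊆ P}, U ∩ C
  have hAC : C ⊆ A P ∪ A Q := by
    intro c hc
    by_cases hcK : c ∈ K
    · rcases hPQ (Or.inl ⟨hc, hcK⟩) with h | h
      · exact Or.inl (Or.inl ⟨⟨hc, hcK⟩, h⟩)
      · exact Or.inr (Or.inl ⟨⟨hc, hcK⟩, h⟩)
    · have hU : connectedComponentIn Kᶜ c ∈ M := by
        rw [hM]
        exact ⟨⟨c, hcK, rfl⟩, c, mem_connectedComponentIn hcK, hc⟩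
      rcases hside _ hU with h | h
      · exact Or.inl (Or.inr (mem_iUnion₂.2 ⟨_, ⟨hU, h⟩, mem_connectedComponentIn hcK, hc⟩))
      · exact Or.inr (Or.inr (mem_iUnion₂.2 ⟨_, ⟨hU, h⟩, mem_connectedComponentIn hcK, hc⟩))
  have hAd : ∀ y, y ∈ A P → y ∈ A Q → False := by
    rintro y (⟨hy, hyP⟩ | hy) (⟨hy', hyQ⟩ | hy')
    · exact hnot y (Or.inl hy) hyP hyQ
    · obtain ⟨U, ⟨hU, -⟩, hyU, -⟩ := mem_iUnion₂.1 hy'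
      exact hMK U hU y hyU hy.2
    · obtain ⟨U, ⟨hU, -⟩, hyU, -⟩ := mem_iUnion₂.1 hy
      exact hMK U hU y hyU hy'.2
    · obtain ⟨U, ⟨hU, hUP⟩, hyU, -⟩ := mem_iUnion₂.1 hy
      obtain ⟨U', ⟨hU', hUQ⟩, hyU', -⟩ := mem_iUnion₂.1 hy'
      obtain rfl := hMeq U hU U' hU' y hyU hyU'
      obtain ⟨z, hz⟩ := hLn U hU
      exact hnot z (hLs U hU hz) (hUP hz) (hUQ hz)
  have hAcl : ∀ P, IsClosed P → C ∩ closure (A P) ⊆ A P := by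
    rintro P hP c ⟨hc, hcA⟩
    by_cases hcK : c ∈ K
    · by_cases hcP : c ∈ P
      · exact Or.inl ⟨⟨hc, hcK⟩, hcP⟩
      exfalso
      obtain ⟨ρ, hρ, hρP⟩ := Metric.mem_nhds_iff.1 (hP.isOpen_compl.mem_nhds hcP)
      -- near `c ∉ P`, only components that are not small are attached to `P`
      have hsub : ball c (ρ / 2) ∩ A P ⊆ ⋃ U ∈ {U ∈ M | L U ⊆ P ∧ ρ / 2 ≤ Metric.diam U}, U := by
        rintro y ⟨hyb, hy | hy⟩
        · exact absurd hy.2 (hρP (ball_subset_ball (by linarith) hyb))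
        obtain ⟨U, ⟨hU, hUP⟩, hyU, -⟩ := mem_iUnion₂.1 hy
        refine mem_iUnion₂.2 ⟨U, ⟨hU, hUP, ?_⟩, hyU⟩
        by_contra! hd
        obtain ⟨p, hp⟩ := hLn U hU
        have h1 : dist p y ≤ Metric.diam U := by
          rw [← Metric.diam_closure]
          exact dist_le_diam_of_mem (Bornology.IsBounded.all _)
            (frontier_subset_closure (hLf U hU hp)) (subset_closure hyU)
        refine hρP ?_ (hUP hp)
        rw [mem_ball] at hyb ⊢
        linarith [dist_triangle p y c]
      have hcl := closure_mono hsub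
        (isOpen_ball.inter_closure ⟨mem_ball_self (half_pos hρ), hcA⟩)
      rw [Set.Finite.closure_biUnion] at hcl
      · obtain ⟨U, ⟨hU, hUP, -⟩, hcU⟩ := mem_iUnion₂.1 hcl
        refine hcP (hUP (hCL U hU ⟨hc, ?_⟩))
        rw [(hMo U hU).frontier_eq]
        exact ⟨hcU, fun h => hMK U hU c h hcK⟩
      · refine (hfin (ρ / 2) (half_pos hρ)).subset ?_
        rintro U ⟨hU, -, hd⟩
        rw [hM] at hU
        exact ⟨hU.1, hd⟩
    · have hU : connectedComponentIn Kᶜ c ∈ M := by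
        rw [hM]
        exact ⟨⟨c, hcK, rfl⟩, c, mem_connectedComponentIn hcK, hc⟩
      obtain ⟨y, hyU, hy | hy⟩ := mem_closure_iff.1 hcA _ (hMo _ hU) (mem_connectedComponentIn hcK)
      · exact absurd hy.1.2 (hMK _ hU y hyU)
      obtain ⟨U', ⟨hU', hUP⟩, hyU', -⟩ := mem_iUnion₂.1 hy
      obtain rfl := hMeq _ hU U' hU' y hyU hyU'
      exact Or.inr (mem_iUnion₂.2 ⟨_, ⟨hU, hUP⟩, mem_connectedComponentIn hcK, hc⟩)
  have hback : ∀ P, C ⊆ A P → (C ∩ K) ∪ ⋃ U ∈ M, L U ⊆ P := by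
    rintro P hCA y (⟨hy, hyK⟩ | hy)
    · rcases hCA hy with h | h
      · exact h.2
      · obtain ⟨U, ⟨hU, -⟩, hyU, -⟩ := mem_iUnion₂.1 h
        exact absurd hyK (hMK U hU y hyU)
    · obtain ⟨U, hU, hyU⟩ := mem_iUnion₂.1 hy
      have hU2 := hU
      rw [hM] at hU2
      obtain ⟨z, hzU, hzC⟩ := hU2.2
      rcases hCA hzC with h | h
      · exact absurd h.1.2 (hMK U hU z hzU)
      · obtain ⟨U', ⟨hU', hUP⟩, hzU', -⟩ := mem_iUnion₂.1 h
        obtain rfl := hMeq U hU U' hU' z hzU hzU'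
        exact hUP hyU
  rcases isPreconnected_iff_subset_of_disjoint_closed.1 hC (closure (A P)) (closure (A Q))
    isClosed_closure isClosed_closure
    (hAC.trans (union_subset_union subset_closure subset_closure))
    (eq_empty_of_forall_notMem fun y ⟨hyC, h1, h2⟩ =>
      hAd y (hAcl P hP ⟨hyC, h1⟩) (hAcl Q hQ ⟨hyC, h2⟩)) with h | h
  · exact Or.inl (hback P fun c hc => hAcl P hP ⟨hc, h hc⟩)
  · exact Or.inr (hback Q fun c hc => hAcl Q hQ ⟨hc, h hc⟩)

theorem diam_component_pos {K : Set S2} (hK : IsClosed K) {u : S2} (hu : u ∈ Kᶜ) :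
    0 < Metric.diam (connectedComponentIn Kᶜ u) := by
  obtain ⟨e, he, -, her⟩ := exists_small_chart u
    (hK.isOpen_compl.connectedComponentIn.mem_nhds (mem_connectedComponentIn hu))
  exact Metric.diam_pos ⟨e 0, her ⟨0, rfl⟩, e 1, her ⟨1, rfl⟩, he.injective.ne zero_ne_one⟩
    (Bornology.IsBounded.all _)

/-- Conditions (i) and (ii) imply that `K` is locally connected: replace a small connected
neighbourhood of `x ∈ K` in the sphere by a subset of `K` through `isPreconnected_patch`. -/
theorem locConn_of_components {K : Set S2} (hK : IsClosed K) (hKc : IsConnected K)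
    (hfin : ∀ ε : ℝ, 0 < ε → {U : Set S2 | (∃ w ∈ Kᶜ, U = connectedComponentIn Kᶜ w) ∧
      ε ≤ Metric.diam U}.Finite)
    (hfr : ∀ U : Set S2, (∃ w ∈ Kᶜ, U = connectedComponentIn Kᶜ w) → LocConn (frontier U)) :
    LocConn K := by
  intro x hx O hO
  obtain ⟨ε, hε, hεO⟩ := Metric.mem_nhds_iff.1 hO
  -- `η` is so small that a component of diameter less than `η` is not the only component
  obtain ⟨η, hη, hηε, hηU⟩ : ∃ η : ℝ, 0 < η ∧ η ≤ ε / 2 ∧ ∀ u ∈ Kᶜ,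
      ∃ v ∈ Kᶜ, η ≤ Metric.diam (connectedComponentIn Kᶜ v) := by
    by_cases hne : (Kᶜ).Nonempty
    · obtain ⟨v, hv⟩ := hne
      exact ⟨min (ε / 2) (Metric.diam (connectedComponentIn Kᶜ v)),
        lt_min (by positivity) (diam_component_pos hK hv), min_le_left _ _,
        fun u _ => ⟨v, hv, min_le_right _ _⟩⟩
    · exact ⟨ε / 2, by positivity, le_rfl, fun u hu => absurd ⟨u, hu⟩ hne⟩
  have hloc : ∀ U : Set S2, ∃ N V : Set S2, (∃ w ∈ Kᶜ, U = connectedComponentIn Kᶜ w) →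
      N ⊆ frontier U ∧ N ⊆ ball x ε ∧ IsPreconnected N ∧ V ∈ 𝓝 x ∧ V ∩ frontier U ⊆ N := by
    intro U
    by_cases hU : ∃ w ∈ Kᶜ, U = connectedComponentIn Kᶜ w
    · by_cases hxU : x ∈ frontier U
      · obtain ⟨N, hNf, hNb, hN, hNx⟩ := hfr U hU x hxU _ (ball_mem_nhds x hε)
        obtain ⟨V, hV, hVN⟩ := mem_nhdsWithin_iff_exists_mem_nhds_inter.1 hNx
        exact ⟨N, V, fun _ => ⟨hNf, hNb, hN, hV, hVN⟩⟩
      · exact ⟨∅, (frontier U)ᶜ, fun _ => ⟨empty_subset _, empty_subset _, isPreconnected_empty,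
          isClosed_frontier.isOpen_compl.mem_nhds hxU, fun y hy => hy.1 hy.2⟩⟩
    · exact ⟨∅, ∅, fun h => absurd h hU⟩
  choose N V hNV using hloc
  set D : Set S2 := ball x (ε / 4) ∩ ⋂ U ∈ {U : Set S2 | (∃ w ∈ Kᶜ, U = connectedComponentIn Kᶜ w) ∧
      η ≤ Metric.diam U}, V U with hDdef
  have hD : D ∈ 𝓝 x := by
    refine inter_mem (ball_mem_nhds x (by positivity)) ?_
    rw [biInter_mem (hfin η hη)]
    exact fun U hU => (hNV U hU.1).2.2.2.1
  have hCD : connectedComponentIn D x ⊆ D := connectedComponentIn_subset _ _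
  have hCx : connectedComponentIn D x ∈ 𝓝 x := connectedComponentIn_mem_nhds hD
  have hC : IsPreconnected (connectedComponentIn D x) := isPreconnected_connectedComponentIn
  set C := connectedComponentIn D x
  have hxC : x ∈ C := mem_of_mem_nhds hCx
  classical
  let L : Set S2 → Set S2 := fun U => if η ≤ Metric.diam U then N U else frontier U
  set M : Set (Set S2) := {U | (∃ w ∈ Kᶜ, U = connectedComponentIn Kᶜ w) ∧ (U ∩ C).Nonempty}
    with hM
  have hLf : ∀ U ∈ M, L U ⊆ frontier U := by
    intro U hU
    by_cases hd : η ≤ Metric.diam U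
    · simp only [L, if_pos hd]; exact (hNV U hU.1).1
    · simp only [L, if_neg hd]; exact Subset.rfl
  have hLp : ∀ U ∈ M, IsPreconnected (L U) := by
    intro U hU
    by_cases hd : η ≤ Metric.diam U
    · simp only [L, if_pos hd]; exact (hNV U hU.1).2.2.1
    · simp only [L, if_neg hd]
      obtain ⟨⟨u, hu, rfl⟩, -⟩ := hU
      obtain ⟨v, hv, hvd⟩ := hηU u hu
      exact isPreconnected_frontier_of_ne hK hKc hv fun h => hd (h ▸ hvd)
  have hCL : ∀ U ∈ M, C ∩ frontier U ⊆ L U := by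
    rintro U hU y ⟨hyC, hyU⟩
    by_cases hd : η ≤ Metric.diam U
    · simp only [L, if_pos hd]
      exact (hNV U hU.1).2.2.2.2 ⟨mem_iInter₂.1 (hCD hyC).2 U ⟨hU.1, hd⟩, hyU⟩
    · simp only [L, if_neg hd]; exact hyU
  have hLb : ∀ U ∈ M, L U ⊆ ball x ε := by
    intro U hU
    by_cases hd : η ≤ Metric.diam U
    · simp only [L, if_pos hd]; exact (hNV U hU.1).2.1
    · simp only [L, if_neg hd]
      intro y hy
      obtain ⟨z, hzU, hzC⟩ := hU.2
      have h1 : dist y z ≤ Metric.diam U := by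
        rw [← Metric.diam_closure]
        exact dist_le_diam_of_mem (Bornology.IsBounded.all _)
          (frontier_subset_closure hy) (subset_closure hzU)
      have h2 := mem_ball.1 (hCD hzC).1
      rw [mem_ball]
      linarith [dist_triangle y z x]
  have hLn : ∀ U ∈ M, (L U).Nonempty := by
    intro U hU
    have hU' := hU
    obtain ⟨⟨u, hu, rfl⟩, z, hzU, hzC⟩ := hU'
    have hUo : IsOpen (connectedComponentIn Kᶜ u) := hK.isOpen_compl.connectedComponentIn
    by_contra hne
    have := hC.subset_of_closure_inter_subset hUo ⟨z, hzC, hzU⟩ (by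
      rintro y ⟨hy, hyC⟩
      by_contra hn
      exact hne ⟨y, hCL _ hU ⟨hyC, by rw [hUo.frontier_eq]; exact ⟨hy, hn⟩⟩⟩) hxC
    exact (connectedComponentIn_subset _ _ this : x ∈ Kᶜ) hx
  refine ⟨(C ∩ K) ∪ ⋃ U ∈ M, L U, ?_, ?_,
    isPreconnected_patch hK hC hfin hM L hLn hLf hLp hCL, ?_⟩
  · refine union_subset inter_subset_right (iUnion₂_subset fun U hU => (hLf U hU).trans ?_)
    obtain ⟨⟨u, -, rfl⟩, -⟩ := hU
    exact frontier_component_subset hK u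
  · refine union_subset (fun y hy => hεO ?_) (iUnion₂_subset fun U hU => (hLb U hU).trans hεO)
    exact ball_subset_ball (by linarith) (hCD hy.1).1
  · refine mem_of_superset ?_ subset_union_left
    exact inter_mem (mem_nhdsWithin_of_mem_nhds hCx) self_mem_nhdsWithin

/-- A compact connected set `K ⊆ S²` is locally connected if and only if (i) for every
`ε > 0` only finitely many connected components of `S² ∖ K` have diameter at least `ε`,
and (ii) the frontier of every connected component of `S² ∖ K` is locally connected. -/
theorem locallyConnected_iff_components
    (K : Set S2) (hKcompact : IsCompact K) (hKconn : IsConnected K) :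
    LocallyConnectedSpace K ↔
      ((∀ ε : ℝ, 0 < ε →
          {U : Set S2 | (∃ w ∈ Kᶜ, U = connectedComponentIn Kᶜ w) ∧
            ε ≤ Metric.diam U}.Finite) ∧
        ∀ U : Set S2, (∃ w ∈ Kᶜ, U = connectedComponentIn Kᶜ w) →
          LocallyConnectedSpace ↥(frontier U)) := by
  simp only [locallyConnectedSpace_iff_locConn]
  have hK := hKcompact.isClosed
  constructor
  · intro h
    refine ⟨fun ε hε => finite_large_components hK h hε, ?_⟩
    rintro _ ⟨w, hw, rfl⟩
    exact locConn_frontier_component hK h hw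
  · rintro ⟨hfin, hfr⟩
    exact locConn_of_components hK hKconn hfin hfr
end

section
/- The Mandelbrot set M is a connected subset of ℂ. -/
/-- The Mandelbrot set: the set of `c ∈ ℂ` for which the orbit of the critical point `0`
under `z ↦ z ^ 2 + c` is bounded. -/
def mandelbrot : Set ℂ :=
  {c | Bornology.IsBounded (Set.range fun n => (fun z : ℂ => z ^ 2 + c)^[n] 0)}

/-!
Write `f_c z = z ^ 2 + c` and `P_n c = f_c^[n] 0`, a polynomial in `c` with `deg P_{n+1} = 2 ^ n`.
The elementary escape estimates show that the Mandelbrot set is the intersection of the decreasing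
sequence of compact lemniscates `{c | ‖P_{n+1} c‖ ≤ 3}`, so it suffices that each lemniscate is
connected.

Fix `n`, put `N = 2 ^ n` and `Q = P_{n+1}`. The crucial fact (`exists_root_critOrbit`) is that `Q`
has a continuous `N`-th root `Φ` on `Y = {c | 2 < ‖Q c‖}`; this replaces the Böttcher coordinate of
Douady and Hubbard. Given `Φ`:

* `Φ` is holomorphic, hence open, and it is proper as a map from `Y` to
  `T = {w | 2 < ‖w‖ ^ N}`; since `T` is connected, `Φ` maps onto `T`
  (`subset_image_of_pow_eq`).
* For `v = Q a` with `a ∈ Y`, the at most `N` roots of `Q - v` are mapped by `Φ` onto the `N`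
  distinct `N`-th roots of `v`; so `Φ` is injective (`injOn_of_pow_eq`).
* Thus `Φ` is a homeomorphism from `Y` to `T`, the level set `{‖Q‖ = 3}` is homeomorphic to a circle
  and so connected, and the lemniscate `{‖Q‖ ≤ 3}` is connected because each nonempty clopen piece
  must meet the level set (`isPreconnected_sublevel_of_level`).

To construct `Φ`, a right inverse `ψ_k` of the `2 ^ k`-th root of `f_c^[k]` near infinity, that is
`f_c^[k] (ψ_k w) = w ^ 2 ^ k`, is built by recursion on `k`, simultaneously for all `c`, from
`ψ_{k+1}(w) ^ 2 = ψ_k(w ^ 2) - c`. In the coordinate `u = 1 / w`, the pairs `(c, u)` with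
`‖P_j c‖ * ‖u‖ ^ 2 ^ k < 1` for all `j ≤ n` form a bundle of discs over `ℂ`, which is contractible,
and there `ψ_k(w ^ 2) - c` does not vanish as long as `k < n`; hence the square root exists. For
`c ∈ Y` the growth of the orbit gives `‖P_j c‖ < ‖Q c‖` for all `j ≤ n`, so `c` lies in the image of
`ψ_n`, and `Φ c` is the unique `w` with `ψ_n w = c`.
-/

open Set Filter Topology Polynomial

/-! ### Escape estimates for the critical orbit -/

/-- `critOrbit c n` is the `n`-th point of the orbit of the critical point `0` under
`z ↦ z ^ 2 + c`. -/
def critOrbit (c : ℂ) (n : ℕ) : ℂ := (fun z : ℂ => z ^ 2 + c)^[n] 0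

lemma critOrbit_zero (c : ℂ) : critOrbit c 0 = 0 := rfl

lemma critOrbit_succ (c : ℂ) (n : ℕ) : critOrbit c (n + 1) = critOrbit c n ^ 2 + c := by
  simp [critOrbit, Function.iterate_succ_apply']

lemma critOrbit_one (c : ℂ) : critOrbit c 1 = c := by
  simp [critOrbit]

lemma critOrbit_succ' (c : ℂ) (n : ℕ) :
    critOrbit c (n + 1) = (fun z : ℂ => z ^ 2 + c)^[n] c := by
  simp [critOrbit, Function.iterate_succ_apply]

/-- Once the orbit has left both the disc of radius `2` and the disc of radius `‖c‖`, its modulus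
grows geometrically. -/
lemma norm_critOrbit_add_ge {c : ℂ} {m : ℕ} (h2 : 2 < ‖critOrbit c m‖)
    (hc : ‖c‖ ≤ ‖critOrbit c m‖) (i : ℕ) :
    ‖critOrbit c m‖ * (‖critOrbit c m‖ - 1) ^ i ≤ ‖critOrbit c (m + i)‖ := by
  induction i with
  | zero => simp
  | succ i ih =>
    set a := ‖critOrbit c m‖
    have h1 : a ≤ ‖critOrbit c (m + i)‖ := by
      refine le_trans ?_ ih
      have : 1 ≤ (a - 1) ^ i := one_le_pow₀ (by linarith)
      nlinarith
    rw [← add_assoc, critOrbit_succ]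
    set z := critOrbit c (m + i)
    have h3 : ‖z‖ ^ 2 - ‖c‖ ≤ ‖z ^ 2 + c‖ := by
      have := norm_sub_le (z ^ 2 + c) c
      rw [add_sub_cancel_right, norm_pow] at this
      linarith
    have h4 : (a * (a - 1) ^ i) * (a - 1) ≤ ‖z‖ * (a - 1) := by gcongr; linarith
    rw [pow_succ]
    nlinarith

/-- A point of the critical orbit outside the disc of radius `2` is strictly larger than all earlier
ones: an earlier point at least as large would already be in the range of geometric growth. -/
lemma norm_critOrbit_lt {c : ℂ} {n j : ℕ} (h2 : 2 < ‖critOrbit c (n + 1)‖)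
    (hj : j ≤ n) : ‖critOrbit c j‖ < ‖critOrbit c (n + 1)‖ := by
  have key : ∀ m ≤ n + 1, 2 < ‖critOrbit c m‖ → ‖c‖ ≤ ‖critOrbit c m‖ →
      ‖critOrbit c m‖ ≤ ‖critOrbit c (n + 1)‖ ∧
        (m < n + 1 → ‖critOrbit c m‖ < ‖critOrbit c (n + 1)‖) := by
    intro m hm h h'
    have := norm_critOrbit_add_ge h h' (n + 1 - m)
    rw [Nat.add_sub_cancel' hm] at this
    constructor
    · have h3 : 1 ≤ (‖critOrbit c m‖ - 1) ^ (n + 1 - m) := one_le_pow₀ (by linarith)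
      nlinarith
    · intro hlt
      have h3 : 1 < (‖critOrbit c m‖ - 1) ^ (n + 1 - m) :=
        one_lt_pow₀ (by linarith) (by omega)
      nlinarith
  have hc : ‖c‖ ≤ ‖critOrbit c (n + 1)‖ := by
    by_contra! hlt
    have := (key 1 (by omega) (by rw [critOrbit_one]; linarith) (by rw [critOrbit_one])).1
    rw [critOrbit_one] at this
    linarith
  by_contra! hle
  have := (key j (by omega) (by linarith) (by linarith)).2 (by omega)
  linarith

lemma norm_le_norm_critOrbit {c : ℂ} {n : ℕ} (h2 : 2 < ‖critOrbit c (n + 1)‖) :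
    ‖c‖ ≤ ‖critOrbit c (n + 1)‖ := by
  rcases Nat.eq_zero_or_pos n with rfl | hn
  · simp [critOrbit_one]
  · simpa [critOrbit_one] using (norm_critOrbit_lt h2 hn).le

lemma mandelbrot_eq_iInter :
    mandelbrot = ⋂ n : ℕ, {c | ‖critOrbit c (n + 1)‖ ≤ 3} := by
  ext c
  have hM : c ∈ mandelbrot ↔ Bornology.IsBounded (range fun n => critOrbit c n) := Iff.rfl
  rw [hM, isBounded_iff_forall_norm_le, mem_iInter]
  simp only [forall_mem_range, mem_ofPred_eq]
  constructor
  · rintro ⟨C, hC⟩ n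
    by_contra! h
    have h2 : 2 < ‖critOrbit c (n + 1)‖ := by linarith
    obtain ⟨i, hi⟩ := pow_unbounded_of_one_lt C (y := ‖critOrbit c (n + 1)‖ - 1) (by linarith)
    have h3 := norm_critOrbit_add_ge h2 (norm_le_norm_critOrbit h2) i
    have h4 : ‖critOrbit c (n + 1 + i)‖ ≤ C := hC _
    have h5 : 0 ≤ (‖critOrbit c (n + 1)‖ - 1) ^ i := pow_nonneg (by linarith) i
    nlinarith
  · intro h
    refine ⟨3, fun n => ?_⟩
    rcases n with _ | n
    · simp [critOrbit_zero]
    · exact h n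

lemma antitone_sublevel : Antitone fun n : ℕ => {c | ‖critOrbit c (n + 1)‖ ≤ 3} := by
  refine antitone_nat_of_succ_le fun n c hc => ?_
  by_contra h
  simp only [mem_ofPred_eq, not_le] at hc h
  have h2 : 2 < ‖critOrbit c (n + 1)‖ := by linarith
  have := norm_critOrbit_add_ge h2 (norm_le_norm_critOrbit h2) 1
  nlinarith

/-! ### Decreasing intersections of connected compact sets -/

lemma isPreconnected_iInter_of_antitone {X : Type*} [TopologicalSpace X] [T2Space X] [NormalSpace X]
    {L : ℕ → Set X} (hL : Antitone L) (hc : ∀ n, IsCompact (L n))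
    (hp : ∀ n, IsPreconnected (L n)) : IsPreconnected (⋂ n, L n) := by
  rw [isPreconnected_iff_subset_of_fully_disjoint_closed
    (isClosed_iInter fun n => (hc n).isClosed)]
  intro u v hu hv huv hd
  obtain ⟨U, V, hU, hV, huU, hvV, hUV⟩ := normal_separation hu hv hd
  obtain ⟨n, hn⟩ := exists_subset_nhds_of_isCompact hL.directed_ge hc (U := U ∪ V)
    (fun x hx => (hU.union hV).mem_nhds ((huv hx).imp (@huU x) (@hvV x)))
  refine ((hp n).subset_or_subset hU hV hUV hn).imp (fun h x hx => ?_) (fun h x hx => ?_)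
  · exact (huv hx).resolve_right fun hxv =>
      hUV.le_bot ⟨h (mem_iInter.1 hx n), hvV hxv⟩
  · exact (huv hx).resolve_left fun hxu =>
      hUV.le_bot ⟨huU hxu, h (mem_iInter.1 hx n)⟩

/-! ### The polynomials in the parameter -/

/-- The polynomial in the parameter whose values are `critOrbit · n`. -/
noncomputable def critPoly : ℕ → ℂ[X]
  | 0 => 0
  | n + 1 => critPoly n ^ 2 + X

lemma eval_critPoly (n : ℕ) (c : ℂ) : (critPoly n).eval c = critOrbit c n := by
  induction n with
  | zero => simp [critPoly, critOrbit_zero]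
  | succ n ih => simp [critPoly, critOrbit_succ, ih]

lemma natDegree_critPoly (n : ℕ) : (critPoly (n + 1)).natDegree = 2 ^ n := by
  induction n with
  | zero => simp [critPoly]
  | succ n ih =>
    have h : (critPoly (n + 1) ^ 2).natDegree = 2 ^ (n + 1) := by
      rw [natDegree_pow, ih, pow_succ, mul_comm]
    rw [critPoly, natDegree_add_eq_left_of_natDegree_lt, h]
    rw [h, natDegree_X]
    exact Nat.one_lt_two_pow (by omega)

lemma continuous_critOrbit (n : ℕ) : Continuous fun c => critOrbit c n := by
  simp_rw [← eval_critPoly]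
  exact (critPoly n).continuous

/-! ### Lemniscates of a polynomial with a continuous root of full order -/

section
variable {Q : ℂ[X]} {N : ℕ} {r : ℝ} {Φ : ℂ → ℂ}

lemma isCompact_sublevel (hQ : 0 < Q.degree) (M : ℝ) : IsCompact {c | ‖Q.eval c‖ ≤ M} := by
  have h1 : Tendsto (fun c => ‖Q.eval c‖) (cocompact ℂ) atTop :=
    Q.tendsto_norm_atTop hQ tendsto_norm_cocompact_atTop
  have h2 : ∀ᶠ c in cocompact ℂ, M < ‖Q.eval c‖ := h1.eventually_gt_atTop M
  obtain ⟨K, hK, hKM⟩ := mem_cocompact.1 h2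
  refine hK.of_isClosed_subset (isClosed_le Q.continuous.norm continuous_const) fun c hc => ?_
  by_contra hcK
  have : M < ‖Q.eval c‖ := hKM hcK
  exact absurd hc (not_le.2 this)

lemma exists_eval_eq (hQ : 0 < Q.degree) (v : ℂ) : ∃ c, Q.eval c = v := by
  obtain ⟨c, hc⟩ := IsAlgClosed.exists_root (Q - C v) (by
    rw [degree_sub_C hQ]; exact hQ.ne')
  exact ⟨c, by simpa [sub_eq_zero] using hc⟩

lemma isOpen_superlevel (Q : ℂ[X]) (r : ℝ) : IsOpen {c | r < ‖Q.eval c‖} :=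
  isOpen_lt continuous_const Q.continuous.norm

/-- A continuous `N`-th root of `Q` is holomorphic: `Q x - Q c = S x * (Φ x - Φ c)` with
`S x = ∑ Φ x ^ i * Φ c ^ (N - 1 - i)`, and `S x` tends to `N * Φ c ^ (N - 1) ≠ 0`. -/
lemma differentiableAt_of_pow_eq (hN : N ≠ 0) (hr : 0 ≤ r)
    (hΦ : ContinuousOn Φ {c | r < ‖Q.eval c‖})
    (hpow : ∀ c, r < ‖Q.eval c‖ → Φ c ^ N = Q.eval c) {c : ℂ} (hc : r < ‖Q.eval c‖) :
    DifferentiableAt ℂ Φ c := by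
  have hmem : {c | r < ‖Q.eval c‖} ∈ 𝓝 c := (isOpen_superlevel Q r).mem_nhds hc
  have hcont : ContinuousAt Φ c := hΦ.continuousAt hmem
  have hne : Φ c ≠ 0 := by
    intro h0
    have := hpow c hc
    rw [h0, zero_pow hN] at this
    rw [← this, norm_zero] at hc
    linarith
  set S : ℂ → ℂ := fun x => ∑ i ∈ Finset.range N, Φ x ^ i * Φ c ^ (N - 1 - i) with hS
  have hSc : Tendsto S (𝓝 c) (𝓝 (S c)) := by
    have : ContinuousAt S c := by fun_prop
    exact this
  have hSne : S c ≠ 0 := by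
    have : S c = N * Φ c ^ (N - 1) := by
      simp only [hS, ← pow_add]
      rw [Finset.sum_congr rfl (g := fun _ => Φ c ^ (N - 1))]
      · simp
      · intro i hi
        have := Finset.mem_range.1 hi
        congr 1; omega
    rw [this]
    exact mul_ne_zero (by exact_mod_cast hN) (pow_ne_zero _ hne)
  have hQd : HasDerivAt (fun x => Q.eval x) (Q.derivative.eval c) c := Q.hasDerivAt c
  suffices h : HasDerivAt Φ (Q.derivative.eval c / S c) c from h.differentiableAt
  rw [hasDerivAt_iff_tendsto_slope]
  refine ((hasDerivAt_iff_tendsto_slope.1 hQd).div (hSc.mono_left nhdsWithin_le_nhds) hSne).congr' ?_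
  filter_upwards [mem_nhdsWithin_of_mem_nhds hmem,
    mem_nhdsWithin_of_mem_nhds (hSc.eventually_ne hSne)] with x hx hSx
  have key := (Commute.all (Φ x) (Φ c)).geom_sum₂_mul N
  rw [hpow x hx, hpow c hc] at key
  simp only [Pi.div_apply, slope_def_field]
  rw [← key]
  change S x * (Φ x - Φ c) / (x - c) / S x = _
  field_simp

/-- A continuous `N`-th root of `Q` is an open map at each point of `{c | r < ‖Q c‖}`. -/
lemma nhds_le_map_of_pow_eq (hQ : 0 < Q.degree) (hN : N ≠ 0) (hr : 0 ≤ r)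
    (hΦ : ContinuousOn Φ {c | r < ‖Q.eval c‖})
    (hpow : ∀ c, r < ‖Q.eval c‖ → Φ c ^ N = Q.eval c) {c : ℂ} (hc : r < ‖Q.eval c‖) :
    𝓝 (Φ c) ≤ map Φ (𝓝 c) := by
  have hmem : {c | r < ‖Q.eval c‖} ∈ 𝓝 c := (isOpen_superlevel Q r).mem_nhds hc
  have han : AnalyticAt ℂ Φ c :=
    (DifferentiableOn.analyticAt (s := {c | r < ‖Q.eval c‖})
      (fun x hx => (differentiableAt_of_pow_eq hN hr hΦ hpow hx).differentiableWithinAt) hmem)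
  refine han.eventually_constant_or_nhds_le_map_nhds.resolve_left fun hconst => ?_
  have hev : ∀ᶠ z in 𝓝 c, z ∈ {z | (Q - C (Q.eval c)).IsRoot z} := by
    filter_upwards [hconst, hmem] with z hz hzY
    have : Q.eval z = Q.eval c := by rw [← hpow z hzY, hz, hpow c hc]
    simp [this]
  have hne : Q - C (Q.eval c) ≠ 0 := by
    intro h
    have := degree_sub_C hQ (a := Q.eval c)
    rw [h, degree_zero] at this
    rw [← this] at hQ
    simp at hQ
  exact infinite_of_mem_nhds c hev (finite_setOfPred_isRoot hne)

/-- The exterior of a disc is the image of a half-plane under `exp`. -/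
lemma isPreconnected_norm_pow_gt (hN : N ≠ 0) (hr : 0 < r) :
    IsPreconnected {w : ℂ | r < ‖w‖ ^ N} := by
  have hN' : (0 : ℝ) < N := by exact_mod_cast Nat.pos_of_ne_zero hN
  have h : {w : ℂ | r < ‖w‖ ^ N} = Complex.exp '' {z : ℂ | Real.log r / N < z.re} := by
    ext w
    simp only [mem_ofPred_eq, mem_image]
    constructor
    · intro hw
      have hw0 : w ≠ 0 := by
        rintro rfl
        rw [norm_zero, zero_pow hN] at hw
        linarith
      refine ⟨Complex.log w, ?_, Complex.exp_log hw0⟩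
      rw [Complex.log_re, div_lt_iff₀ hN', mul_comm, ← Real.log_pow]
      exact Real.log_lt_log hr hw
    · rintro ⟨z, hz, rfl⟩
      rw [div_lt_iff₀ hN', mul_comm] at hz
      rw [Complex.norm_exp, ← Real.exp_nat_mul]
      exact (Real.log_lt_iff_lt_exp hr).1 hz
  rw [h]
  exact ((convex_halfSpace_re_gt _).isPreconnected).image _ Complex.continuous_exp.continuousOn

/-- A continuous `N`-th root of `Q` on `{c | r < ‖Q c‖}` attains every value `w` with
`r < ‖w‖ ^ N`: its image is open, and relatively closed because sublevel sets of `Q` are compact. -/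
lemma subset_image_of_pow_eq (hQ : 0 < Q.degree) (hN : N ≠ 0) (hr : 0 < r)
    (hΦ : ContinuousOn Φ {c | r < ‖Q.eval c‖})
    (hpow : ∀ c, r < ‖Q.eval c‖ → Φ c ^ N = Q.eval c) :
    {w : ℂ | r < ‖w‖ ^ N} ⊆ Φ '' {c | r < ‖Q.eval c‖} := by
  apply (isPreconnected_norm_pow_gt hN hr).subset_of_closure_inter_subset
  · rw [isOpen_iff_mem_nhds]
    rintro _ ⟨c, hc, rfl⟩
    exact nhds_le_map_of_pow_eq hQ hN hr.le hΦ hpow hc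
      (image_mem_map ((isOpen_superlevel Q r).mem_nhds hc))
  · obtain ⟨c, hc⟩ := exists_eval_eq hQ ((r + 1 : ℝ) : ℂ)
    have hc' : r < ‖Q.eval c‖ := by
      rw [hc, Complex.norm_real, Real.norm_eq_abs, abs_of_pos (by linarith)]
      linarith
    refine ⟨Φ c, ?_, c, hc', rfl⟩
    rw [mem_ofPred_eq, ← norm_pow, hpow c hc']
    exact hc'
  · rintro w ⟨hw, hwr⟩
    obtain ⟨y, hy, hyw⟩ := mem_closure_iff_seq_limit.1 hw
    choose x hx hxy using hy
    obtain rfl : Φ ∘ x = y := funext hxy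
    have hQx : Tendsto (fun k => Q.eval (x k)) atTop (𝓝 (w ^ N)) := by
      refine (hyw.pow N).congr fun k => hpow _ (hx k)
    have hbd : ∀ᶠ k in atTop, x k ∈ {c | ‖Q.eval c‖ ≤ ‖w ^ N‖ + 1} := by
      filter_upwards [hQx.norm.eventually_lt_const (lt_add_one ‖w ^ N‖)] with k hk using hk.le
    obtain ⟨c, -, φ, hφ, hc⟩ :=
      (isCompact_sublevel hQ (‖w ^ N‖ + 1)).tendsto_subseq' hbd.frequently
    have hQc : Q.eval c = w ^ N :=
      tendsto_nhds_unique ((Q.continuous.tendsto c).comp hc) (hQx.comp hφ.tendsto_atTop)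
    have hcY : r < ‖Q.eval c‖ := by
      rw [hQc, norm_pow]; exact hwr
    refine ⟨c, hcY, ?_⟩
    exact tendsto_nhds_unique
      ((hΦ.continuousAt ((isOpen_superlevel Q r).mem_nhds hcY)).tendsto.comp hc)
      (hyw.comp hφ.tendsto_atTop)

/-- If `N = deg Q`, the root `Φ` is injective: it maps the roots of `Q - v`, of which there are at
most `N`, onto the `N` distinct `N`-th roots of `v`. -/
lemma injOn_of_pow_eq (hdeg : Q.natDegree = N) (hN : N ≠ 0) (hr : 0 < r)
    (hΦ : ContinuousOn Φ {c | r < ‖Q.eval c‖})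
    (hpow : ∀ c, r < ‖Q.eval c‖ → Φ c ^ N = Q.eval c) :
    InjOn Φ {c | r < ‖Q.eval c‖} := by
  classical
  have hQ : 0 < Q.degree := natDegree_pos_iff_degree_pos.1 (by omega)
  intro a ha b hb hab
  set v := Q.eval a with hv
  have hvb : Q.eval b = v := by rw [← hpow b hb, ← hab, hpow a ha]
  have hv0 : v ≠ 0 := by
    intro h
    rw [mem_ofPred_eq, ← hv, h, norm_zero] at ha
    linarith
  have hne : Q - C v ≠ 0 := by
    intro h
    have := degree_sub_C hQ (a := v)
    rw [h, degree_zero] at this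
    rw [← this] at hQ
    simp at hQ
  have hroot : ∀ c, c ∈ (Q - C v).roots.toFinset ↔ Q.eval c = v := by
    intro c
    simp [mem_roots hne, sub_eq_zero]
  have hroot' : ∀ w, w ∈ nthRootsFinset N v ↔ w ^ N = v := by
    intro w
    exact mem_nthRootsFinset (Nat.pos_of_ne_zero hN) v
  have hcard : (Q - C v).roots.toFinset.card ≤ (nthRootsFinset N v).card := by
    have h1 : (nthRootsFinset N v).card = N := by
      have hp := Complex.isPrimitiveRoot_exp N hN
      rw [nthRootsFinset_def, Multiset.toFinset_card_of_nodup (hp.nthRoots_nodup hv0),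
        hp.card_nthRoots, if_pos ⟨Φ a, hpow a ha⟩]
    rw [h1]
    refine (Multiset.toFinset_card_le _).trans ((card_roots' _).trans ?_)
    rw [natDegree_sub_C, hdeg]
  have hY : ∀ c, Q.eval c = v → r < ‖Q.eval c‖ := fun c hc => by rw [hc]; exact ha
  refine Finset.inj_on_of_surj_on_of_card_le (fun c (_ : c ∈ (Q - C v).roots.toFinset) => Φ c)
    (fun c hc => ?_) (fun w hw => ?_) hcard ((hroot a).2 rfl) ((hroot b).2 hvb) hab
  · rw [hroot] at hc
    rw [hroot', hpow c (hY c hc), hc]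
  · rw [hroot'] at hw
    have hwr : r < ‖w‖ ^ N := by
      rw [← norm_pow, hw]; exact ha
    obtain ⟨c, hc, rfl⟩ := subset_image_of_pow_eq hQ hN hr hΦ hpow hwr
    refine ⟨c, ?_, rfl⟩
    rw [hroot, ← hpow c hc, hw]

lemma isPreconnected_level (hdeg : Q.natDegree = N) (hN : N ≠ 0) (hr : 0 < r)
    (hΦ : ContinuousOn Φ {c | r < ‖Q.eval c‖})
    (hpow : ∀ c, r < ‖Q.eval c‖ → Φ c ^ N = Q.eval c) {t : ℝ} (ht : r < t) :
    IsPreconnected {c | ‖Q.eval c‖ = t} := by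
  have hQ : 0 < Q.degree := natDegree_pos_iff_degree_pos.1 (by omega)
  set Y := {c | r < ‖Q.eval c‖} with hYdef
  set s := t ^ (1 / (N : ℝ)) with hs
  have ht0 : 0 < t := hr.trans ht
  have hsN : s ^ N = t := by
    rw [hs, one_div]; exact Real.rpow_inv_natCast_pow ht0.le hN
  have hs0 : 0 ≤ s := Real.rpow_nonneg ht0.le _
  have hopen : IsOpenMap (Y.domRestrict Φ) := by
    rw [isOpenMap_iff_nhds_le]
    rintro ⟨c, hc⟩
    have := nhds_le_map_of_pow_eq hQ hN hr.le hΦ hpow hc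
    rw [← map_nhds_subtype_coe_eq_nhds hc ((isOpen_superlevel Q r).mem_nhds hc), map_map] at this
    exact this
  have hinj : Function.Injective (Y.domRestrict Φ) :=
    injOn_iff_injective.1 (injOn_of_pow_eq hdeg hN hr hΦ hpow)
  have hsub : Metric.sphere (0 : ℂ) s ⊆ range (Y.domRestrict Φ) := by
    intro w hw
    rw [range_domRestrict]
    apply subset_image_of_pow_eq hQ hN hr hΦ hpow
    rw [mem_sphere_zero_iff_norm] at hw
    rw [mem_ofPred_eq, hw, hsN]
    exact ht
  have hpre := (isPreconnected_sphere (by simp) (0 : ℂ) s).preimage_of_isOpenMap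
    hinj hopen hsub
  have := hpre.image Subtype.val continuous_subtype_val.continuousOn
  convert this
  ext c
  simp only [mem_ofPred_eq, mem_image, mem_preimage, mem_sphere_zero_iff_norm]
  constructor
  · intro hc
    have hcY : c ∈ Y := by rw [hYdef, mem_ofPred_eq, hc]; exact ht
    refine ⟨⟨c, hcY⟩, ?_, rfl⟩
    have : ‖Φ c‖ ^ N = s ^ N := by rw [← norm_pow, hpow c hcY, hc, hsN]
    exact (pow_left_inj₀ (norm_nonneg _) hs0 hN).1 this
  · rintro ⟨⟨c, hcY⟩, hc, rfl⟩
    change ‖Φ c‖ = s at hc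
    rw [← hpow c hcY, norm_pow, hc, hsN]

/-- A clopen piece of `{‖Q‖ ≤ t}` that misses the level set `{‖Q‖ = t}` is compact and open in `ℂ`,
hence empty. -/
lemma isPreconnected_sublevel_of_level (hQ : 0 < Q.degree) {t : ℝ}
    (h : IsPreconnected {c | ‖Q.eval c‖ = t}) : IsPreconnected {c | ‖Q.eval c‖ ≤ t} := by
  have hcpt := isCompact_sublevel hQ t
  have key : ∀ u v : Set ℂ, IsClosed u → IsClosed v → {c | ‖Q.eval c‖ ≤ t} ⊆ u ∪ v → Disjoint u v →
      {c | ‖Q.eval c‖ = t} ⊆ u → {c | ‖Q.eval c‖ ≤ t} ⊆ u := by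
    intro u v hu hv huv hd hSu
    set W := {c | ‖Q.eval c‖ ≤ t} ∩ v with hW
    have hcl : IsClosed W := hcpt.isClosed.inter hv
    have hop : IsOpen W := by
      -- `W` misses the level set, so the weak inequality is strict on it.
      have : W = {c | ‖Q.eval c‖ < t} ∩ uᶜ := by
        ext c
        constructor
        · rintro ⟨hc, hcv⟩
          have hcu : c ∉ u := fun hcu => hd.le_bot ⟨hcu, hcv⟩
          exact ⟨lt_of_le_of_ne hc fun he => hcu (hSu he), hcu⟩
        · rintro ⟨hc, hcu⟩
          have hc' : ‖Q.eval c‖ ≤ t := le_of_lt hc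
          exact ⟨hc', (huv hc').resolve_left hcu⟩
      rw [this]
      exact (isOpen_lt Q.continuous.norm continuous_const).inter hu.isOpen_compl
    rcases isClopen_iff.1 ⟨hcl, hop⟩ with h0 | h1
    · intro c hc
      refine (huv hc).resolve_right fun hcv => ?_
      have : c ∈ W := ⟨hc, hcv⟩
      rw [h0] at this
      exact this
    · exfalso
      refine noncompact_univ ℂ (hcpt.of_isClosed_subset isClosed_univ ?_)
      rw [← h1]
      exact inter_subset_left
  rw [isPreconnected_iff_subset_of_fully_disjoint_closed hcpt.isClosed]
  intro u v hu hv huv hd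
  have hSL : {c | ‖Q.eval c‖ = t} ⊆ {c | ‖Q.eval c‖ ≤ t} := fun c hc => le_of_eq hc
  rcases isPreconnected_iff_subset_of_disjoint_closed.1 h u v hu hv (hSL.trans huv)
    (by rw [hd.inter_eq, inter_empty]) with h1 | h1
  · exact Or.inl (key u v hu hv huv hd h1)
  · exact Or.inr (key v u hv hu (by rwa [union_comm]) hd.symm h1)
end

/-! ### A root of the critical orbit polynomial -/

/-- The domain of the `k`-th approximate inverse Böttcher map, in the coordinates `(c, u)` with
`u = 1 / w`; the value `u = 0` stands for `w = ∞`. The radius of the disc over `c` is governed by the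
first `n` points of the critical orbit. -/
def bottcherDomain (n k : ℕ) : Set (ℂ × ℂ) :=
  {p | ∀ j ≤ n, ‖critOrbit p.1 j‖ * ‖p.2‖ ^ 2 ^ k < 1}

lemma mem_bottcherDomain {n k : ℕ} {c u : ℂ} :
    (c, u) ∈ bottcherDomain n k ↔ ∀ j ≤ n, ‖critOrbit c j‖ * ‖u‖ ^ 2 ^ k < 1 := Iff.rfl

lemma isOpen_bottcherDomain (n k : ℕ) : IsOpen (bottcherDomain n k) := by
  have h : bottcherDomain n k =
      ⋂ j ∈ Finset.range (n + 1), {p : ℂ × ℂ | ‖critOrbit p.1 j‖ * ‖p.2‖ ^ 2 ^ k < 1} := by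
    ext p
    simp [bottcherDomain]
  rw [h]
  refine isOpen_biInter_finset fun j _ => isOpen_lt ?_ continuous_const
  have := (continuous_critOrbit j).comp (continuous_fst (X := ℂ) (Y := ℂ))
  exact this.norm.mul (by fun_prop)

lemma smul_mem_bottcherDomain {n k : ℕ} {c u : ℂ} (h : (c, u) ∈ bottcherDomain n k) {t : ℂ}
    (ht : ‖t‖ ≤ 1) : (c, t * u) ∈ bottcherDomain n k := by
  intro j hj
  refine lt_of_le_of_lt ?_ (h j hj)
  simp only [norm_mul]
  gcongr
  exact mul_le_of_le_one_left (norm_nonneg _) ht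

/-- The domain is contractible, since shrinking the fibre coordinate retracts it to the base `ℂ`. -/
lemma isSimplyConnected_bottcherDomain (n k : ℕ) : IsSimplyConnected (bottcherDomain n k) := by
  let toF : C(bottcherDomain n k, ℂ) := ⟨fun p => p.1.1, by fun_prop⟩
  let invF : C(ℂ, bottcherDomain n k) := ⟨fun c => ⟨(c, 0), fun j _ => by simp⟩, by fun_prop⟩
  let e : ContinuousMap.HomotopyEquiv (bottcherDomain n k) ℂ :=
    { toFun := toF
      invFun := invF
      left_inv := ⟨{
        toFun := fun q => ⟨(q.2.1.1, ((q.1 : ℝ) : ℂ) * q.2.1.2),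
          smul_mem_bottcherDomain q.2.2 (by
            rw [Complex.norm_real, Real.norm_eq_abs, abs_of_nonneg q.1.2.1]; exact q.1.2.2)⟩
        continuous_toFun := by fun_prop
        map_zero_left := fun p => by
          apply Subtype.ext
          simp [toF, invF]
        map_one_left := fun p => by
          apply Subtype.ext
          simp }⟩
      right_inv := by
        have : toF.comp invF = ContinuousMap.id ℂ := rfl
        rw [this] }
  have := e.contractibleSpace
  exact SimplyConnectedSpace.ofContractible (bottcherDomain n k)

/-- The function `η` encodes an approximate inverse Böttcher map `ψ_c(w) = w * η (c, 1 / w)`: for each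
`c`, it is an injective map, continuous also in `c`, with `f_c^[k] (ψ_c w) = w ^ 2 ^ k`, whose image
contains every `z` for which `f_c^[k] z` is larger than `f_c^[j] 0` for all `j ≤ n`. The value
`ψ_c(w)` appears below as `η (c, u) / u` with `u = 1 / w`. -/
structure IsBottcherInverse (n k : ℕ) (η : ℂ × ℂ → ℂ) : Prop where
  continuousOn : ContinuousOn η (bottcherDomain n k)
  ne_zero : ∀ p ∈ bottcherDomain n k, η p ≠ 0
  iterate : ∀ c u, (c, u) ∈ bottcherDomain n k → u ≠ 0 →
    (fun z : ℂ => z ^ 2 + c)^[k] (η (c, u) / u) = u⁻¹ ^ 2 ^ k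
  inj : ∀ c u v, (c, u) ∈ bottcherDomain n k → (c, v) ∈ bottcherDomain n k → u ≠ 0 → v ≠ 0 →
    η (c, u) / u = η (c, v) / v → u = v
  surj : ∀ c z, (fun z : ℂ => z ^ 2 + c)^[k] z ≠ 0 →
    (∀ j ≤ n, ‖critOrbit c j‖ < ‖(fun z : ℂ => z ^ 2 + c)^[k] z‖) →
    ∃ u, u ≠ 0 ∧ (c, u) ∈ bottcherDomain n k ∧ η (c, u) / u = z

lemma isBottcherInverse_zero (n : ℕ) : IsBottcherInverse n 0 (fun _ => 1) where
  continuousOn := continuousOn_const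
  ne_zero _ _ := one_ne_zero
  iterate c u _ _ := by simp
  inj c u v _ _ _ _ h := by simpa using h
  surj c z hz h := by
    simp only [Function.iterate_zero, id] at hz h
    refine ⟨z⁻¹, inv_ne_zero hz, fun j hj => ?_, by simp⟩
    have := h j hj
    have hz' := norm_pos_iff.2 hz
    simp only [pow_zero, pow_one, norm_inv]
    rwa [← div_eq_mul_inv, div_lt_one hz']

lemma sq_mem_bottcherDomain {n k : ℕ} {c u : ℂ} :
    (c, u ^ 2) ∈ bottcherDomain n k ↔ (c, u) ∈ bottcherDomain n (k + 1) := by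
  simp only [mem_bottcherDomain, norm_pow, ← pow_mul, pow_succ' 2 k]

/-- The critical value `c` is not in the image of `ψ_c`: if it were `ψ_c(1 / v)`, then
`f_c^[k+1] 0 = f_c^[k] c` would have modulus `‖v‖⁻¹ ^ 2 ^ k`, against the definition of the domain. -/
lemma IsBottcherInverse.sub_ne_zero {n k : ℕ} {η : ℂ × ℂ → ℂ} (h : IsBottcherInverse n k η)
    (hk : k < n) {c v : ℂ} (hv : (c, v) ∈ bottcherDomain n k) : η (c, v) - c * v ≠ 0 := by
  intro h0
  by_cases hv0 : v = 0
  · subst hv0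
    exact h.ne_zero _ hv (by simpa using h0)
  · have h1 : η (c, v) / v = c := by
      rw [div_eq_iff hv0]; exact sub_eq_zero.1 h0
    have h2 := h.iterate c v hv hv0
    rw [h1, ← critOrbit_succ'] at h2
    have h3 := hv (k + 1) hk
    have h4 : ‖v‖ ^ 2 ^ k ≠ 0 := pow_ne_zero _ (norm_ne_zero_iff.2 hv0)
    simp only [h2, norm_pow, norm_inv, inv_pow] at h3
    rw [inv_mul_cancel₀ h4] at h3
    exact lt_irrefl _ h3

/-- The recursion step `ψ_{k+1}(w) ^ 2 = ψ_k(w ^ 2) - c`. -/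
lemma IsBottcherInverse.exists_succ {n k : ℕ} {η : ℂ × ℂ → ℂ} (h : IsBottcherInverse n k η)
    (hk : k < n) : ∃ η', IsBottcherInverse n (k + 1) η' := by
  obtain ⟨L, hLc, hL⟩ := Complex.exists_continuousOn_eqOn_exp_comp
    (isSimplyConnected_bottcherDomain n k) (isOpen_bottcherDomain n k)
    (g := fun p => η p - p.1 * p.2)
    (h.continuousOn.sub (by fun_prop)) (by
      rintro ⟨⟨c, v⟩, hv, h0⟩
      exact h.sub_ne_zero hk hv h0)
  -- Taking the logarithm at `(c, u ^ 2)` makes `η'` even in `u`, so that the new `ψ` is odd.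
  set η' : ℂ × ℂ → ℂ := fun p => Complex.exp (L (p.1, p.2 ^ 2) / 2) with hη'
  have hsq : ∀ c u, (c, u) ∈ bottcherDomain n (k + 1) →
      η' (c, u) ^ 2 = η (c, u ^ 2) - c * u ^ 2 := by
    intro c u hu
    have := hL (sq_mem_bottcherDomain.2 hu)
    simp only [Function.comp_apply] at this
    rw [← this, hη', ← Complex.exp_nat_mul]
    congr 1
    push_cast
    ring
  have hne : ∀ p, η' p ≠ 0 := fun p => Complex.exp_ne_zero _
  have heven : ∀ c u, η' (c, -u) = η' (c, u) := fun c u => by simp [hη']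
  have hstep : ∀ c u, (c, u) ∈ bottcherDomain n (k + 1) → u ≠ 0 →
      (η' (c, u) / u) ^ 2 + c = η (c, u ^ 2) / u ^ 2 := by
    intro c u hu hu0
    rw [div_pow, hsq c u hu]
    field_simp
    ring
  refine ⟨η', ?_, fun p _ => hne p, ?_, ?_, ?_⟩
  · refine Complex.continuous_exp.comp_continuousOn (ContinuousOn.div_const ?_ 2)
    exact hLc.comp (f := fun p : ℂ × ℂ => (p.1, p.2 ^ 2)) (by fun_prop)
      fun p hp => sq_mem_bottcherDomain.2 hp
  · intro c u hu hu0
    rw [Function.iterate_succ_apply, hstep c u hu hu0,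
      h.iterate c _ (sq_mem_bottcherDomain.2 hu) (pow_ne_zero 2 hu0), ← inv_pow, ← pow_mul,
      pow_succ' 2 k]
  · intro c u v hu hv hu0 hv0 huv
    have h1 : u ^ 2 = v ^ 2 := by
      refine h.inj c _ _ (sq_mem_bottcherDomain.2 hu) (sq_mem_bottcherDomain.2 hv)
        (pow_ne_zero 2 hu0) (pow_ne_zero 2 hv0) ?_
      rw [← hstep c u hu hu0, ← hstep c v hv hv0, huv]
    rcases sq_eq_sq_iff_eq_or_eq_neg.1 h1 with h2 | h2
    · exact h2
    · exfalso
      rw [h2, heven, div_neg] at huv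
      exact div_ne_zero (hne (c, v)) hv0 (self_eq_neg.1 huv.symm)
  · intro c z hz hlt
    rw [Function.iterate_succ_apply] at hz hlt
    obtain ⟨v, hv0, hv, hvz⟩ := h.surj c _ hz hlt
    obtain ⟨u, rfl⟩ := IsAlgClosed.exists_pow_nat_eq v (n := 2) two_pos
    have hu0 : u ≠ 0 := fun h0 => hv0 (by simp [h0])
    have hu := sq_mem_bottcherDomain.1 hv
    rw [← hstep c u hu hu0] at hvz
    rcases sq_eq_sq_iff_eq_or_eq_neg.1 (add_right_cancel hvz) with h2 | h2
    · exact ⟨u, hu0, hu, h2⟩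
    · refine ⟨-u, neg_ne_zero.2 hu0, ?_, ?_⟩
      · simpa only [mem_bottcherDomain, norm_neg] using hu
      · rw [heven, div_neg, h2, neg_neg]

lemma exists_isBottcherInverse (n : ℕ) {k : ℕ} (hk : k ≤ n) : ∃ η, IsBottcherInverse n k η := by
  induction k with
  | zero => exact ⟨_, isBottcherInverse_zero n⟩
  | succ k ih =>
    obtain ⟨η, hη⟩ := ih (by omega)
    exact hη.exists_succ hk

/-- The root is `Φ c = 1 / u`, where `u` is the unique solution of `ψ_c(1 / u) = c`. -/
lemma exists_root_critOrbit (n : ℕ) :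
    ∃ Φ : ℂ → ℂ, ContinuousOn Φ {c | 2 < ‖critOrbit c (n + 1)‖} ∧
      ∀ c, 2 < ‖critOrbit c (n + 1)‖ → Φ c ^ 2 ^ n = critOrbit c (n + 1) := by
  obtain ⟨η, h⟩ := exists_isBottcherInverse n le_rfl
  have hex : ∀ c, ∃ u, 2 < ‖critOrbit c (n + 1)‖ →
      u ≠ 0 ∧ (c, u) ∈ bottcherDomain n n ∧ η (c, u) = c * u := by
    intro c
    by_cases hc : 2 < ‖critOrbit c (n + 1)‖
    · obtain ⟨u, hu0, hu, hcu⟩ := h.surj c c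
        (by rw [← critOrbit_succ', ← norm_pos_iff]; linarith)
        (fun j hj => by rw [← critOrbit_succ']; exact norm_critOrbit_lt hc hj)
      exact ⟨u, fun _ => ⟨hu0, hu, (div_eq_iff hu0).1 hcu⟩⟩
    · exact ⟨0, fun h => absurd h hc⟩
  choose g hg using hex
  have hgpow : ∀ c, 2 < ‖critOrbit c (n + 1)‖ → g c ^ 2 ^ n * critOrbit c (n + 1) = 1 := by
    intro c hc
    obtain ⟨hu0, hu, hcu⟩ := hg c hc
    have := h.iterate c _ hu hu0
    rw [(div_eq_iff hu0).2 hcu, ← critOrbit_succ'] at this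
    rw [this, ← mul_pow, mul_inv_cancel₀ hu0, one_pow]
  have hcont : ContinuousOn g {c | 2 < ‖critOrbit c (n + 1)‖} := by
    -- The solution stays bounded, and by uniqueness each of its cluster points at `c` is `g c`.
    intro c hc
    refine (isCompact_closedBall (0 : ℂ) 1).tendsto_nhds_of_unique_mapClusterPt ?_ ?_
    · filter_upwards [self_mem_nhdsWithin] with x hx
      rw [mem_closedBall_zero_iff]
      by_contra! hlt
      have h1 : ‖g x‖ ^ 2 ^ n * ‖critOrbit x (n + 1)‖ = 1 := by
        rw [← norm_pow, ← norm_mul, hgpow x hx, norm_one]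
      have h2 : 1 ≤ ‖g x‖ ^ 2 ^ n := one_le_pow₀ hlt.le
      have h3 : 2 < ‖critOrbit x (n + 1)‖ := hx
      nlinarith
    · intro y _ hy
      obtain ⟨U, hU, hUy⟩ := mapClusterPt_iff_ultrafilter.1 hy
      have hUid : Tendsto (fun x : ℂ => x) U (𝓝 c) := hU.trans nhdsWithin_le_nhds
      have hUmem : ∀ᶠ x in (U : Filter ℂ), 2 < ‖critOrbit x (n + 1)‖ :=
        hU self_mem_nhdsWithin
      have hypow : y ^ 2 ^ n * critOrbit c (n + 1) = 1 := by
        refine tendsto_nhds_unique ((hUy.pow (2 ^ n)).mul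
          (((continuous_critOrbit (n + 1)).tendsto c).comp hUid)) ?_
        exact tendsto_const_nhds.congr' (hUmem.mono fun x hx => (hgpow x hx).symm)
      have hy0 : y ≠ 0 := by
        rintro rfl
        simp at hypow
      have hymem : (c, y) ∈ bottcherDomain n n := by
        intro j hj
        have h1 : ‖critOrbit c j‖ < ‖critOrbit c (n + 1)‖ := norm_critOrbit_lt hc hj
        have h2 : 0 < ‖y‖ ^ 2 ^ n := pow_pos (norm_pos_iff.2 hy0) _
        have h3 : ‖y‖ ^ 2 ^ n * ‖critOrbit c (n + 1)‖ = 1 := by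
          rw [← norm_pow, ← norm_mul, hypow, norm_one]
        simp only
        nlinarith
      have hηy : η (c, y) = c * y := by
        have h1 : Tendsto (fun x => η (x, g x)) U (𝓝 (η (c, y))) :=
          (h.continuousOn.continuousAt
            ((isOpen_bottcherDomain n n).mem_nhds hymem)).tendsto.comp (hUid.prodMk_nhds hUy)
        refine tendsto_nhds_unique h1 ((hUid.mul hUy).congr' ?_)
        exact hUmem.mono fun x hx => (hg x hx).2.2.symm
      obtain ⟨hu0, hu, hcu⟩ := hg c hc
      exact h.inj c _ _ hymem hu hy0 hu0 (by
        rw [(div_eq_iff hu0).2 hcu, (div_eq_iff hy0).2 hηy])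
  refine ⟨fun c => (g c)⁻¹, hcont.inv₀ fun c hc => (hg c hc).1, fun c hc => ?_⟩
  rw [inv_pow]
  exact inv_eq_of_mul_eq_one_right (hgpow c hc)

/-! ### Connectedness -/

/-- The Mandelbrot set is a connected subset of `ℂ`. -/
theorem mandelbrot_isConnected : IsConnected mandelbrot := by
  rw [mandelbrot_eq_iInter]
  have hdeg : ∀ n, 0 < (critPoly (n + 1)).degree := fun n =>
    natDegree_pos_iff_degree_pos.1 (by rw [natDegree_critPoly]; positivity)
  refine ⟨⟨0, mem_iInter.2 fun n => ?_⟩,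
    isPreconnected_iInter_of_antitone antitone_sublevel (fun n => ?_) (fun n => ?_)⟩
  · have : ∀ n, critOrbit 0 n = 0 := by
      intro n
      induction n with
      | zero => rfl
      | succ n ih => rw [critOrbit_succ, ih]; simp
    simp [this]
  · simpa only [eval_critPoly] using isCompact_sublevel (hdeg n) 3
  · obtain ⟨Φ, hΦ, hpow⟩ := exists_root_critOrbit n
    simp only [← eval_critPoly] at hΦ hpow ⊢
    exact isPreconnected_sublevel_of_level (hdeg n) (isPreconnected_level (natDegree_critPoly n)
      (by positivity) two_pos hΦ hpow (by norm_num))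
end
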